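/- arXiv:1411.6963 — 3 statements merged into one kernel-verified Lean document; each statement's English description precedes it below -/
import Mathlib

section
/- Let a, b be positive integers with a ≤ b. If the quadratic form f^{a,b}_2(x,y,z,w) = a·x² + b·y² + 2·(z² + z·w + w²) represents both 1 and 5 (with x, y, z, w ∈ ℤ), then it represents every nonnegative integer. -/
/-!
Representing `1` forces `a = 1`, and then representing `5` forces `b ≤ 5`, because
`T = x² + 2(y² + yz + z²)` is never `5` modulo `8`. Conversely `T` represents every `n` with `4 ∤ n`
and `n ≢ 5` modulo `8`; multiples of `4` follow by doubling a vector, and `n ≡ 5` modulo `8` by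
taking `n - b * y ^ 2` for a small `y`.

For the values of `T`: if `n = 3m` then `m` is a sum of three squares, and
`3(a² + b² + c²) = (a + b + c)² + 2(u² + uv + v²)` with `u = a - b` and `v = b - c`. Otherwise, as
in Dirichlet's proof of the three-square theorem, primes in arithmetic progressions and quadratic
reciprocity give a positive definite ternary form of determinant `3` representing `n`. By Hermite
reduction it is equivalent to `T` or to `x² + y² + 3z²`, and the latter is excluded by anisotropy
modulo `4`.
-/

open Matrix NumberTheorySymbols

section ProperEquivalence

variable {n R : Type*} [Fintype n] [CommRing R]

lemma dotProduct_transpose_mul_mul_mulVec (M U : Matrix n n R) (v : n → R) :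
    v ⬝ᵥ (Uᵀ * M * U) *ᵥ v = (U *ᵥ v) ⬝ᵥ M *ᵥ (U *ᵥ v) := by
  rw [← mulVec_mulVec, ← mulVec_mulVec, dotProduct_mulVec, vecMul_transpose]

variable [DecidableEq n]

/-- Proper equivalence of the quadratic forms with Gram matrices `M` and `N`: they differ by a
change of variables of determinant `1`. -/
def ProperlyEquivalent (M N : Matrix n n R) : Prop :=
  ∃ U : Matrix n n R, U.det = 1 ∧ N = Uᵀ * M * U

/-- The form with Gram matrix `M` takes values divisible by `4` only at vectors divisible by `2`.
This separates `x² + 2(y² + yz + z²)` from `x² + y² + 3z²`, the other form of determinant `3`. -/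
def AnisotropicModFour (M : Matrix n n ℤ) : Prop :=
  ∀ v : n → ZMod 4, v ⬝ᵥ M.map (Int.castRingHom (ZMod 4)) *ᵥ v = 0 → 2 • v = 0

namespace ProperlyEquivalent

variable {M N P : Matrix n n R}

lemma refl (M : Matrix n n R) : ProperlyEquivalent M M := ⟨1, det_one, by simp⟩

lemma trans (hMN : ProperlyEquivalent M N) (hNP : ProperlyEquivalent N P) :
    ProperlyEquivalent M P := by
  obtain ⟨U, hU, rfl⟩ := hMN
  obtain ⟨V, hV, rfl⟩ := hNP
  exact ⟨U * V, by rw [det_mul, hU, hV, one_mul],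
    by simp only [transpose_mul, Matrix.mul_assoc]⟩

lemma det_eq (h : ProperlyEquivalent M N) : N.det = M.det := by
  obtain ⟨U, hU, rfl⟩ := h
  rw [det_mul, det_mul, det_transpose, hU, one_mul, mul_one]

lemma exists_dotProduct_mulVec_eq (h : ProperlyEquivalent M N) (v : n → R) :
    ∃ w, w ⬝ᵥ N *ᵥ w = v ⬝ᵥ M *ᵥ v := by
  obtain ⟨U, hU, rfl⟩ := h
  refine ⟨U.adjugate *ᵥ v, ?_⟩
  rw [dotProduct_transpose_mul_mul_mulVec, mulVec_mulVec, mul_adjugate, hU, one_smul, one_mulVec]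

lemma posDef {M N : Matrix n n ℤ} (h : ProperlyEquivalent M N) (hM : M.PosDef) : N.PosDef := by
  obtain ⟨U, hU, rfl⟩ := h
  rw [← conjTranspose_eq_transpose_of_trivial]
  exact hM.conjTranspose_mul_mul_same
    (mulVec_injective_of_det_ne_zero (hU.symm ▸ one_ne_zero))

lemma anisotropicModFour {M N : Matrix n n ℤ} (h : ProperlyEquivalent M N)
    (hM : AnisotropicModFour M) : AnisotropicModFour N := by
  obtain ⟨U, hU, rfl⟩ := h
  intro v hv
  set V := U.map (Int.castRingHom (ZMod 4)) with hVdef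
  have hV : V.det = 1 := by rw [hVdef, ← RingHom.mapMatrix_apply, ← RingHom.map_det, hU, map_one]
  rw [Matrix.map_mul, Matrix.map_mul, transpose_map, ← hVdef,
    dotProduct_transpose_mul_mul_mulVec] at hv
  have hVv : V *ᵥ (2 • v) = 0 := by rw [mulVec_smul, hM _ hv]
  exact mulVec_injective_of_isUnit ((isUnit_iff_isUnit_det V).2 (hV ▸ isUnit_one))
    (hVv.trans (mulVec_zero V).symm)

end ProperlyEquivalent

end ProperEquivalence

section Reduction

/-- The symmetric matrix with diagonal `a, b, c` and off-diagonal entries `r, s, t`, opposite to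
`a, b, c` respectively. -/
def ternaryGram {R : Type*} (a b c r s t : R) : Matrix (Fin 3) (Fin 3) R :=
  !![a, t, s; t, b, r; s, r, c]

lemma map_ternaryGram {R S : Type*} (f : R → S) (a b c r s t : R) :
    (ternaryGram a b c r s t).map f = ternaryGram (f a) (f b) (f c) (f r) (f s) (f t) := by
  ext i j
  fin_cases i <;> fin_cases j <;> rfl

lemma dotProduct_ternaryGram_mulVec {R : Type*} [CommRing R] (a b c r s t : R) (v : Fin 3 → R) :
    v ⬝ᵥ ternaryGram a b c r s t *ᵥ v = a * v 0 ^ 2 + b * v 1 ^ 2 + c * v 2 ^ 2 +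
      2 * (r * v 1 * v 2 + s * v 0 * v 2 + t * v 0 * v 1) := by
  simp only [ternaryGram, dotProduct, mulVec, Fin.sum_univ_three, of_apply, cons_val]
  ring

lemma det_ternaryGram {R : Type*} [CommRing R] (a b c r s t : R) :
    (ternaryGram a b c r s t).det =
      a * b * c + 2 * r * s * t - a * r ^ 2 - b * s ^ 2 - c * t ^ 2 := by
  simp only [ternaryGram, det_fin_three, of_apply, cons_val]
  ring

lemma isHermitian_ternaryGram (a b c r s t : ℤ) : (ternaryGram a b c r s t).IsHermitian := by
  ext i j
  fin_cases i <;> fin_cases j <;> rfl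

lemma exists_eq_ternaryGram {M : Matrix (Fin 3) (Fin 3) ℤ} (hM : M.IsHermitian) :
    ∃ a b c r s t, M = ternaryGram a b c r s t := by
  refine ⟨M 0 0, M 1 1, M 2 2, M 1 2, M 0 2, M 0 1, (eta_fin_three M).trans ?_⟩
  have h (i j : Fin 3) : M j i = M i j := hM.apply i j
  rw [ternaryGram, h 0 1, h 0 2, h 1 2]

/-- The Gram matrix of the projections of the basis vectors to the orthogonal complement of the
first one, multiplied by the norm `M 0 0` of that vector to keep it integral. -/
def projGram (M : Matrix (Fin 3) (Fin 3) ℤ) (i j : Fin 3) : ℤ := M 0 0 * M i j - M 0 i * M 0 j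

lemma projGram_mul_sub_sq {M : Matrix (Fin 3) (Fin 3) ℤ} (hM : M.IsHermitian) :
    projGram M 1 1 * projGram M 2 2 - projGram M 1 2 ^ 2 = M 0 0 * M.det := by
  obtain ⟨a, b, c, r, s, t, rfl⟩ := exists_eq_ternaryGram hM
  rw [det_ternaryGram]
  simp only [projGram, ternaryGram, of_apply, cons_val]
  ring

lemma projGram_one_one_pos {M : Matrix (Fin 3) (Fin 3) ℤ} (hM : M.PosDef) :
    0 < projGram M 1 1 := by
  have h00 : 0 < M 0 0 := hM.diag_pos
  have hv : (![-M 0 1, M 0 0, 0] : Fin 3 → ℤ) ≠ 0 := fun h => h00.ne' (congrFun h 1)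
  have hpos := hM.dotProduct_mulVec_pos hv
  obtain ⟨a, b, c, r, s, t, rfl⟩ := exists_eq_ternaryGram hM.isHermitian
  rw [star_trivial, dotProduct_ternaryGram_mulVec] at hpos
  simp only [projGram, ternaryGram, of_apply, cons_val] at h00 hpos ⊢
  refine pos_of_mul_pos_right (a := a) ?_ h00.le
  linear_combination hpos

/-- Sylvester's criterion; the second leading minor is `projGram M 1 1`. -/
lemma posDef_of_leading_minors_pos {M : Matrix (Fin 3) (Fin 3) ℤ} (hM : M.IsHermitian)
    (h₁ : 0 < M 0 0) (h₂ : 0 < projGram M 1 1) (h₃ : 0 < M.det) : M.PosDef := by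
  refine .of_dotProduct_mulVec_pos hM fun v hv => ?_
  obtain ⟨a, b, c, r, s, t, rfl⟩ := exists_eq_ternaryGram hM
  rw [star_trivial, dotProduct_ternaryGram_mulVec]
  rw [det_ternaryGram] at h₃
  simp only [projGram, ternaryGram, of_apply, cons_val] at h₁ h₂
  set D := a * b - t * t
  set E := a * r - t * s
  set det := a * b * c + 2 * r * s * t - a * r ^ 2 - b * s ^ 2 - c * t ^ 2
  have hsq : a * D * (a * v 0 ^ 2 + b * v 1 ^ 2 + c * v 2 ^ 2 +
      2 * (r * v 1 * v 2 + s * v 0 * v 2 + t * v 0 * v 1)) =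
      D * (a * v 0 + t * v 1 + s * v 2) ^ 2 + (D * v 1 + E * v 2) ^ 2 + a * det * v 2 ^ 2 := by
    simp only [D, E, det]
    ring
  refine pos_of_mul_pos_right ?_ (mul_pos h₁ h₂).le
  rw [hsq]
  by_cases hv₂ : v 2 = 0
  · by_cases hv₁ : v 1 = 0
    · have hv₀ : v 0 ≠ 0 := fun hv₀ => hv <| by ext i; fin_cases i <;> assumption
      simp only [hv₁, hv₂, mul_zero, add_zero]
      have := mul_ne_zero h₁.ne' hv₀
      positivity
    · simp only [hv₂, mul_zero, add_zero]
      have := mul_ne_zero h₂.ne' hv₁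
      positivity
  · have hdet_pos : 0 < a * det * v 2 ^ 2 := mul_pos (mul_pos h₁ h₃) (by positivity)
    exact add_pos_of_nonneg_of_pos (by positivity) hdet_pos

lemma exists_two_mul_abs_add_mul_le (t : ℤ) {a : ℤ} (ha : 0 < a) : ∃ k, 2 * |t + k * a| ≤ a := by
  lift a to ℕ using ha.le
  refine ⟨-t.bdiv a, ?_⟩
  have hk : t + -t.bdiv a * a = t.bmod a := by linarith [Int.bmod_add_bdiv' t a]
  have hlow := Int.le_bmod (x := t) (m := a) (by omega)
  have hupp := Int.bmod_le (x := t) (m := a) (by omega)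
  rw [hk]
  rcases abs_cases (t.bmod a) with h | h <;> omega

/-- A Hermite-reduced Gram matrix: the first basis vector is at most as long as the second, the same
holds for the projections of the last two to its orthogonal complement, and all the components that
can be size-reduced are. -/
structure IsHermiteReduced (M : Matrix (Fin 3) (Fin 3) ℤ) : Prop where
  two_mul_abs_zero_one_le : 2 * |M 0 1| ≤ M 0 0
  two_mul_abs_zero_two_le : 2 * |M 0 2| ≤ M 0 0
  zero_zero_le_one_one : M 0 0 ≤ M 1 1
  two_mul_abs_projGram_le : 2 * |projGram M 1 2| ≤ projGram M 1 1
  projGram_one_one_le : projGram M 1 1 ≤ projGram M 2 2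

lemma exists_properlyEquivalent_sizeReduced {M : Matrix (Fin 3) (Fin 3) ℤ} (hM : M.PosDef) :
    ∃ N, ProperlyEquivalent M N ∧ N 0 0 = M 0 0 ∧ projGram N 1 1 = projGram M 1 1 ∧
      2 * |N 0 1| ≤ N 0 0 ∧ 2 * |N 0 2| ≤ N 0 0 ∧ 2 * |projGram N 1 2| ≤ projGram N 1 1 := by
  have h00 : 0 < M 0 0 := hM.diag_pos
  obtain ⟨k, hk⟩ := exists_two_mul_abs_add_mul_le (M 0 1) h00
  obtain ⟨l, hl⟩ := exists_two_mul_abs_add_mul_le (projGram M 1 2) (projGram_one_one_pos hM)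
  obtain ⟨m, hm⟩ := exists_two_mul_abs_add_mul_le (M 0 2 + l * M 0 1) h00
  obtain ⟨a, b, c, r, s, t, rfl⟩ := exists_eq_ternaryGram hM.isHermitian
  refine ⟨ternaryGram a (b + 2 * k * t + k ^ 2 * a)
    (c + 2 * l * r + l ^ 2 * b + 2 * m * s + 2 * l * m * t + m ^ 2 * a)
    (r + k * s + l * b + k * l * t + m * t + k * m * a) (s + l * t + m * a) (t + k * a),
    ⟨!![1, k, m; 0, 1, l; 0, 0, 1], by simp [det_fin_three], ?_⟩, ?_⟩
  · ext i j
    fin_cases i <;> fin_cases j <;>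
      simp [ternaryGram, mul_apply, Fin.sum_univ_three] <;> ring
  · simp only [projGram, ternaryGram, of_apply, cons_val] at hk hl hm ⊢
    refine ⟨trivial, by ring, hk, hm, ?_⟩
    ring_nf at hl ⊢
    exact hl

lemma exists_properlyEquivalent_swap_zero_one (M : Matrix (Fin 3) (Fin 3) ℤ) :
    ∃ N, ProperlyEquivalent M N ∧ N 0 0 = M 1 1 :=
  ⟨_, ⟨!![0, -1, 0; 1, 0, 0; 0, 0, 1], by simp [det_fin_three], rfl⟩,
    by simp [mul_apply, Fin.sum_univ_three]⟩

lemma exists_properlyEquivalent_swap_one_two (M : Matrix (Fin 3) (Fin 3) ℤ) :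
    ∃ N, ProperlyEquivalent M N ∧ N 0 0 = M 0 0 ∧ projGram N 1 1 = projGram M 2 2 :=
  ⟨_, ⟨!![1, 0, 0; 0, 0, -1; 0, 1, 0], by simp [det_fin_three], rfl⟩,
    by simp [mul_apply, Fin.sum_univ_three], by simp [mul_apply, Fin.sum_univ_three, projGram]⟩

theorem exists_properlyEquivalent_isHermiteReduced {M : Matrix (Fin 3) (Fin 3) ℤ}
    (hM : M.PosDef) : ∃ N, ProperlyEquivalent M N ∧ IsHermiteReduced N := by
  let size (N : Matrix (Fin 3) (Fin 3) ℤ) : ℕ ×ₗ ℕ :=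
    toLex ((N 0 0).toNat, (projGram N 1 1).toNat)
  obtain ⟨P, hMP, hmin⟩ := exists_minimalFor_of_wellFoundedLT (ProperlyEquivalent M) size
    ⟨M, .refl M⟩
  obtain ⟨N, hPN, h00, h11, h01, h02, h12⟩ := exists_properlyEquivalent_sizeReduced (hMP.posDef hM)
  have hMN := hMP.trans hPN
  have hsize : size N = size P := by simp only [size, h00, h11]
  have hnot_lt {Q} (hNQ : ProperlyEquivalent N Q) : ¬ size Q < size N := fun hlt =>
    (hmin (hMN.trans hNQ) (hsize ▸ hlt.le)).not_gt (hsize ▸ hlt)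
  refine ⟨N, hMN, h01, h02, ?_, h12, ?_⟩
  · obtain ⟨Q, hNQ, hQ⟩ := exists_properlyEquivalent_swap_zero_one N
    have hN : 0 < N 0 0 := (hMN.posDef hM).diag_pos
    by_contra! hlt
    exact hnot_lt hNQ (Prod.Lex.toLex_lt_toLex.2 (.inl (by dsimp only; omega)))
  · obtain ⟨Q, hNQ, hQ, hQ'⟩ := exists_properlyEquivalent_swap_one_two N
    have hN : 0 < projGram N 1 1 := projGram_one_one_pos (hMN.posDef hM)
    by_contra! hlt
    exact hnot_lt hNQ (Prod.Lex.toLex_lt_toLex.2 (.inr (by dsimp only; omega)))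

lemma four_mul_sq_le_sq_of_two_mul_abs_le {x a : ℤ} (h : 2 * |x| ≤ a) : 4 * x ^ 2 ≤ a ^ 2 := by
  calc 4 * x ^ 2 = (2 * |x|) ^ 2 := by rw [mul_pow, sq_abs]; norm_num
    _ ≤ a ^ 2 := by gcongr

lemma IsHermiteReduced.pow_three_le {M : Matrix (Fin 3) (Fin 3) ℤ} (h : IsHermiteReduced M)
    (hM : M.PosDef) : 27 * M 0 0 ^ 3 ≤ 64 * M.det := by
  have h00 : 0 < M 0 0 := hM.diag_pos
  have hD_pos := projGram_one_one_pos hM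
  have hD_ge : 3 * M 0 0 ^ 2 ≤ 4 * projGram M 1 1 := by
    have h01 := four_mul_sq_le_sq_of_two_mul_abs_le h.two_mul_abs_zero_one_le
    have h11 := mul_le_mul_of_nonneg_left h.zero_zero_le_one_one h00.le
    rw [projGram]
    linarith
  have hD_le : 3 * projGram M 1 1 ^ 2 ≤ 4 * (M 0 0 * M.det) := by
    have h12 := four_mul_sq_le_sq_of_two_mul_abs_le h.two_mul_abs_projGram_le
    have h22 := mul_le_mul_of_nonneg_left h.projGram_one_one_le hD_pos.le
    linarith [projGram_mul_sub_sq hM.isHermitian]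
  have hsq : (3 * M 0 0 ^ 2) ^ 2 ≤ (4 * projGram M 1 1) ^ 2 := by gcongr
  refine le_of_mul_le_mul_left ?_ h00
  linarith

lemma IsHermiteReduced.eq_ternaryGram_of_det_le_three {M : Matrix (Fin 3) (Fin 3) ℤ}
    (h : IsHermiteReduced M) (hM : M.PosDef) (hdet : M.det ≤ 3) :
    ∃ b c r, M = ternaryGram 1 b c r 0 0 ∧ 0 < b ∧ 2 * |r| ≤ b ∧ b ≤ c ∧ b * c - r ^ 2 = M.det := by
  have h00 : M 0 0 = 1 := by
    have hpos : 0 < M 0 0 := hM.diag_pos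
    have hcube := h.pow_three_le hM
    by_contra hne
    have : 2 ^ 3 ≤ M 0 0 ^ 3 := by gcongr; omega
    omega
  have h01 : M 0 1 = 0 := abs_eq_zero.1 (by
    have := h.two_mul_abs_zero_one_le
    have := abs_nonneg (M 0 1)
    omega)
  have h02 : M 0 2 = 0 := abs_eq_zero.1 (by
    have := h.two_mul_abs_zero_two_le
    have := abs_nonneg (M 0 2)
    omega)
  have hpos := projGram_one_one_pos hM
  obtain ⟨-, -, -, h12, h22⟩ := h
  have hdet' := projGram_mul_sub_sq hM.isHermitian
  simp only [projGram, h00, h01, h02, one_mul, mul_zero, sub_zero] at hpos h12 h22 hdet'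
  refine ⟨M 1 1, M 2 2, M 1 2, ?_, hpos, h12, h22, hdet'⟩
  have hsymm (i j : Fin 3) : M j i = M i j := hM.isHermitian.apply i j
  refine (eta_fin_three M).trans ?_
  rw [ternaryGram, hsymm 0 1, hsymm 0 2, hsymm 1 2, h00, h01, h02]

lemma le_two_of_mul_sub_sq_le_three {b c r : ℤ} (hr : 2 * |r| ≤ b) (hbc : b ≤ c)
    (hdet : b * c - r ^ 2 ≤ 3) : b ≤ 2 := by
  have hr' := four_mul_sq_le_sq_of_two_mul_abs_le hr
  by_contra! hb
  nlinarith

lemma eq_one_of_mul_sub_sq_eq_one {b c r : ℤ} (hb : 0 < b) (hr : 2 * |r| ≤ b) (hbc : b ≤ c)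
    (hdet : b * c - r ^ 2 = 1) : b = 1 ∧ c = 1 ∧ r = 0 := by
  have hb₂ := le_two_of_mul_sub_sq_le_three hr hbc (by omega)
  obtain ⟨hr₁, hr₂⟩ : -1 ≤ r ∧ r ≤ 1 := abs_le.1 (by omega)
  interval_cases r <;> interval_cases b <;> simp_all <;> omega

lemma eq_or_eq_of_mul_sub_sq_eq_three {b c r : ℤ} (hb : 0 < b) (hr : 2 * |r| ≤ b) (hbc : b ≤ c)
    (hdet : b * c - r ^ 2 = 3) : b = 1 ∧ c = 3 ∧ r = 0 ∨ b = 2 ∧ c = 2 ∧ r ^ 2 = 1 := by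
  have hb₂ := le_two_of_mul_sub_sq_le_three hr hbc hdet.le
  obtain ⟨hr₁, hr₂⟩ : -1 ≤ r ∧ r ≤ 1 := abs_le.1 (by omega)
  interval_cases r <;> interval_cases b <;> simp_all <;> omega

theorem exists_sum_three_squares_of_posDef {M : Matrix (Fin 3) (Fin 3) ℤ} (hM : M.PosDef)
    (hdet : M.det = 1) (v : Fin 3 → ℤ) : ∃ x y z : ℤ, v ⬝ᵥ M *ᵥ v = x ^ 2 + y ^ 2 + z ^ 2 := by
  obtain ⟨N, hMN, hN⟩ := exists_properlyEquivalent_isHermiteReduced hM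
  obtain ⟨b, c, r, rfl, hb, hr, hbc, hbcr⟩ :=
    hN.eq_ternaryGram_of_det_le_three (hMN.posDef hM) (by rw [hMN.det_eq]; omega)
  obtain ⟨rfl, rfl, rfl⟩ := eq_one_of_mul_sub_sq_eq_one hb hr hbc
    (hbcr.trans (hMN.det_eq.trans hdet))
  obtain ⟨w, hw⟩ := hMN.exists_dotProduct_mulVec_eq v
  refine ⟨w 0, w 1, w 2, ?_⟩
  rw [← hw, dotProduct_ternaryGram_mulVec]
  ring

lemma not_anisotropicModFour_ternaryGram_one_one_three :
    ¬ AnisotropicModFour (ternaryGram 1 1 3 0 0 0) := fun h =>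
  absurd (congrFun (h ![1, 0, 1] (by decide)) 0) (by decide)

theorem exists_sq_add_two_mul_of_posDef {M : Matrix (Fin 3) (Fin 3) ℤ} (hM : M.PosDef)
    (hdet : M.det = 3) (hM₄ : AnisotropicModFour M) (v : Fin 3 → ℤ) :
    ∃ x y z : ℤ, v ⬝ᵥ M *ᵥ v = x ^ 2 + 2 * (y ^ 2 + y * z + z ^ 2) := by
  obtain ⟨N, hMN, hN⟩ := exists_properlyEquivalent_isHermiteReduced hM
  obtain ⟨b, c, r, rfl, hb, hr, hbc, hbcr⟩ :=
    hN.eq_ternaryGram_of_det_le_three (hMN.posDef hM) (by rw [hMN.det_eq, hdet])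
  obtain ⟨rfl, rfl, rfl⟩ | ⟨rfl, rfl, hr⟩ := eq_or_eq_of_mul_sub_sq_eq_three hb hr hbc
    (hbcr.trans (hMN.det_eq.trans hdet))
  · exact absurd (hMN.anisotropicModFour hM₄) not_anisotropicModFour_ternaryGram_one_one_three
  · obtain ⟨w, hw⟩ := hMN.exists_dotProduct_mulVec_eq v
    refine ⟨w 0, w 1, r * w 2, ?_⟩
    rw [← hw, dotProduct_ternaryGram_mulVec]
    linear_combination -2 * w 2 ^ 2 * hr

end Reduction

section Jacobi

lemma jacobiSym_eq_of_dvd_sub {a b : ℤ} {m : ℕ} (h : (m : ℤ) ∣ a - b) : J(a | m) = J(b | m) :=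
  jacobiSym.mod_left' (Int.modEq_iff_dvd.2 h).symm

lemma jacobiSym_neg_two_eq_one {p : ℕ} (hp : p % 8 = 1 ∨ p % 8 = 3) : J(-2 | p) = 1 := by
  rw [jacobiSym.at_neg_two (Nat.odd_iff.2 (by omega)), ZMod.χ₈'_nat_eq_if_mod_eight,
    if_neg (by omega), if_pos hp]

lemma jacobiSym_two_eq_one {p : ℕ} (hp : p % 8 = 1) : J(2 | p) = 1 := by
  rw [jacobiSym.at_two (Nat.odd_iff.2 (by omega)), ZMod.χ₈_nat_eq_if_mod_eight,
    if_neg (by omega), if_pos (.inl hp)]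

lemma jacobiSym_neg_eq_of_mod_four_eq_one {e δ : ℕ} (he : e % 4 = 1) (hδ : Odd δ) :
    J(-δ | e) = J(e | δ) := by
  rw [jacobiSym.neg _ (Nat.odd_iff.2 (by omega)), ZMod.χ₄_nat_one_mod_four he, one_mul,
    jacobiSym.quadratic_reciprocity_one_mod_four he hδ]

lemma exists_dvd_sq_sub_of_jacobiSym_eq_one {p : ℕ} (hp : p.Prime) (hp₂ : Odd p) {a : ℤ}
    (h : J(a | p) = 1) (r : ℤ) : ∃ B : ℤ, (p : ℤ) ∣ B ^ 2 - a ∧ B ≡ r [ZMOD 2] := by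
  have := Fact.mk hp
  obtain ⟨x, hx⟩ := ZMod.isSquare_of_jacobiSym_eq_one h
  obtain ⟨B, rfl⟩ := ZMod.intCast_surjective x
  have hdvd : (p : ℤ) ∣ B ^ 2 - a := by
    rw [← ZMod.intCast_zmod_eq_zero_iff_dvd]
    push_cast
    rw [hx, sq, sub_self]
  obtain hB | hB : B ≡ r [ZMOD 2] ∨ B + p ≡ r [ZMOD 2] := by
    obtain ⟨m, rfl⟩ := hp₂
    simp only [Int.ModEq]
    push_cast
    omega
  · exact ⟨B, hdvd, hB⟩
  · have hsq : (B + p) ^ 2 - a = B ^ 2 - a + p * (2 * B + p) := by ring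
    exact ⟨B + p, hsq ▸ hdvd.add (dvd_mul_right _ _), hB⟩

lemma exists_prime_eq_add_mul {a : ℤ} {q : ℕ} (hq : q ≠ 0) (h : IsCoprime a q) :
    ∃ p k : ℕ, p.Prime ∧ (p : ℤ) = a + q * k := by
  obtain ⟨p, hp, hprime, hmod⟩ :=
    Nat.forall_exists_prime_gt_and_zmodEq a.natAbs (q := q) hq h
  obtain ⟨k, hk⟩ := hmod.symm.dvd
  have hk₀ : 0 ≤ k := by
    refine nonneg_of_mul_nonneg_right (a := (q : ℤ)) ?_ (by omega)
    omega
  lift k to ℕ using hk₀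
  exact ⟨p, k, hprime, by omega⟩

variable {δ n : ℕ}

lemma jacobiSym_neg_two_mul_eq_one {e p : ℕ} (hδ : Odd δ) (he : e % 4 = 1)
    (heδ : (δ : ℤ) ∣ e - 1) (hp : p % 8 = 1 ∨ p % 8 = 3) (hpe : (p : ℤ) = 2 * e * n - δ) :
    J(-(2 * e) | p) = 1 := by
  have hpmod : J(p | e) = J(-δ | e) := jacobiSym_eq_of_dvd_sub ⟨2 * n, by rw [hpe]; ring⟩
  calc J(-(2 * e) | p) = J(-2 | p) * J(e | p) := by rw [← neg_mul, jacobiSym.mul_left]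
    _ = J(p | e) := by
      rw [jacobiSym_neg_two_eq_one hp, one_mul,
        jacobiSym.quadratic_reciprocity_one_mod_four he (Nat.odd_iff.2 (by omega))]
    _ = J(e | δ) := by rw [hpmod, jacobiSym_neg_eq_of_mod_four_eq_one he hδ]
    _ = 1 := by rw [jacobiSym_eq_of_dvd_sub heδ, jacobiSym.one_left]

lemma jacobiSym_neg_eq_one {d p : ℕ} (hδ : Odd δ) (hd : d % 8 = 1) (hdδ : (δ : ℤ) ∣ d + 1)
    (hp : p % 4 = δ % 4) (hpd : (2 * p : ℤ) = d * n - δ) : J(-d | p) = 1 := by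
  have hd₄ : d % 4 = 1 := by omega
  have hp₂ : Odd p := Nat.odd_iff.2 (by have := Nat.odd_iff.1 hδ; omega)
  have hneg : J(-1 | p) = J(-1 | δ) := by
    rw [jacobiSym.at_neg_one hp₂, jacobiSym.at_neg_one hδ, ZMod.χ₄_nat_mod_four, hp,
      ← ZMod.χ₄_nat_mod_four]
  have hdmod : J(d | δ) = J(-1 | δ) := jacobiSym_eq_of_dvd_sub (by rwa [sub_neg_eq_add])
  have hpmod : J(2 * p | d) = J(-δ | d) := jacobiSym_eq_of_dvd_sub ⟨n, by rw [hpd]; ring⟩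
  calc J(-d | p) = J(-1 | p) * J(d | p) := by rw [← jacobiSym.mul_left, neg_one_mul]
    _ = J(-1 | δ) * J(2 * p | d) := by
      rw [hneg, jacobiSym.quadratic_reciprocity_one_mod_four hd₄ hp₂, jacobiSym.mul_left 2,
        jacobiSym_two_eq_one hd, one_mul]
    _ = J(-1 | δ) ^ 2 := by
      rw [hpmod, jacobiSym_neg_eq_of_mod_four_eq_one hd₄ hδ, hdmod, sq]
    _ = 1 := jacobiSym.sq_one (by simp)

lemma exists_prime_eq_two_mul_mul_sub (hδ : Odd δ) (hn : 0 < n) (hcop : IsCoprime (n : ℤ) δ)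
    (hmod : (2 * n - δ : ℤ) % 8 = 1 ∨ (2 * n - δ : ℤ) % 8 = 3) :
    ∃ e p : ℕ, p.Prime ∧ (p % 8 = 1 ∨ p % 8 = 3) ∧ e % 4 = 1 ∧ (δ : ℤ) ∣ e - 1 ∧
      (p : ℤ) = 2 * e * n - δ := by
  have h2δ : IsCoprime (2 : ℤ) δ := Int.isCoprime_two_left.2 (hδ.natCast (R := ℤ))
  have hcop' : IsCoprime (2 * n - δ : ℤ) (8 * δ * n : ℕ) := by
    have h_two : IsCoprime (2 * n - δ : ℤ) 2 :=
      Int.isCoprime_two_right.2 (Int.odd_iff.2 (by omega))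
    have h_delta : IsCoprime (2 * n - δ : ℤ) δ := by
      simpa [sub_eq_add_neg] using (h2δ.mul_left hcop).add_mul_left_left (-1)
    have h_n : IsCoprime (2 * n - δ : ℤ) n := by
      simpa [sub_eq_neg_add, mul_comm] using hcop.symm.neg_left.add_mul_left_left 2
    push_cast
    exact ((h_two.pow_right (n := 3)).mul_right h_delta).mul_right h_n
  obtain ⟨p, k, hp, hpk⟩ := exists_prime_eq_add_mul (by have := hδ.pos; positivity) hcop'
  push_cast at hpk
  refine ⟨1 + 4 * (δ * k), p, hp, ?_, by omega, ⟨4 * k, by push_cast; ring⟩, ?_⟩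
  · have : (8 * δ * n * k : ℤ) = 8 * (δ * n * k) := by ring
    omega
  · rw [hpk]
    push_cast
    ring

lemma exists_dvd_sq_add_two_mul (hδ : Odd δ) (hn : 0 < n) (hcop : IsCoprime (n : ℤ) δ)
    (hmod : (2 * n - δ : ℤ) % 8 = 1 ∨ (2 * n - δ : ℤ) % 8 = 3) :
    ∃ e B : ℤ, 0 < e ∧ e % 4 = 1 ∧ B % 2 = 0 ∧ 0 < 2 * e * n - δ ∧
      2 * e * n - δ ∣ B ^ 2 + 2 * e := by
  obtain ⟨e, p, hp, hp₈, he₄, heδ, hpe⟩ := exists_prime_eq_two_mul_mul_sub hδ hn hcop hmod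
  obtain ⟨B, hB, hB₂⟩ := exists_dvd_sq_sub_of_jacobiSym_eq_one hp (Nat.odd_iff.2 (by omega))
    (jacobiSym_neg_two_mul_eq_one hδ he₄ heδ hp₈ hpe) 0
  rw [sub_neg_eq_add] at hB
  exact ⟨e, B, by omega, by omega, hB₂, hpe ▸ mod_cast hp.pos, hpe ▸ hB⟩

lemma exists_two_mul_prime_eq_mul_sub (hδ : Odd δ) (hcop : IsCoprime (n : ℤ) δ)
    (hmod : n % 8 = 3 * δ % 8) :
    ∃ d p : ℕ, p.Prime ∧ p % 4 = δ % 4 ∧ d % 8 = 1 ∧ (δ : ℤ) ∣ d + 1 ∧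
      (2 * p : ℤ) = d * n - δ := by
  have hδ₂ := Nat.odd_iff.1 hδ
  obtain ⟨i, hi⟩ := Int.eight_dvd_sq_sub_one_of_odd (hδ.natCast (R := ℤ))
  have hi₀ : 0 ≤ i := by have := pow_pos (Int.natCast_pos.2 hδ.pos) 2; omega
  lift i to ℕ using hi₀
  -- `1 + 16 * i` equals `2 * δ ^ 2 - 1`: it is `1` modulo `16` and `-1` modulo `δ`.
  obtain ⟨m, hm, hm₄⟩ : ∃ m : ℤ, 2 * m = (1 + 16 * i) * n - δ ∧ m % 4 = δ % 4 := by
    have : (1 + 16 * i : ℤ) * n = n + 16 * (i * n) := by ring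
    refine ⟨((1 + 16 * i) * n - δ) / 2, ?_⟩
    omega
  have hcop' : IsCoprime m (4 * δ * n : ℕ) := by
    have h_two : IsCoprime m 2 := Int.isCoprime_two_right.2 (Int.odd_iff.2 (by omega))
    have h_delta : IsCoprime (2 * m) δ := by
      have hm' : 2 * m = -n + δ * (2 * δ * n - 1) := by linear_combination hm - 2 * n * hi
      exact hm' ▸ hcop.neg_left.add_mul_left_left _
    have h_n : IsCoprime (2 * m) n := by
      have hm' : 2 * m = -δ + n * (1 + 16 * i) := by linear_combination hm
      exact hm' ▸ hcop.symm.neg_left.add_mul_left_left _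
    push_cast
    exact ((h_two.pow_right (n := 2)).mul_right h_delta.of_mul_left_right).mul_right
      h_n.of_mul_left_right
  have hn : 0 < n := by omega
  obtain ⟨p, k, hp, hpk⟩ := exists_prime_eq_add_mul (by have := hδ.pos; positivity) hcop'
  push_cast at hpk
  refine ⟨1 + 16 * i + 8 * (δ * k), p, hp, ?_, by omega,
    ⟨2 * δ + 8 * k, by push_cast; linear_combination -2 * hi⟩, ?_⟩
  · have : (4 * δ * n * k : ℤ) = 4 * (δ * n * k) := by ring
    omega
  · rw [hpk]
    push_cast
    linear_combination hm

lemma exists_dvd_sq_add (hδ : Odd δ) (hcop : IsCoprime (n : ℤ) δ) (hmod : n % 8 = 3 * δ % 8) :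
    ∃ d B : ℤ, 0 < d ∧ d % 8 = 1 ∧ B % 2 = 1 ∧ 0 < d * n - δ ∧ d * n - δ ∣ B ^ 2 + d := by
  obtain ⟨d, p, hp, hp₄, hd₈, hdδ, hpd⟩ := exists_two_mul_prime_eq_mul_sub hδ hcop hmod
  have hp₂ : Odd p := Nat.odd_iff.2 (by have := Nat.odd_iff.1 hδ; omega)
  obtain ⟨B, hB, hB₂ : B % 2 = 1⟩ := exists_dvd_sq_sub_of_jacobiSym_eq_one hp hp₂
    (jacobiSym_neg_eq_one hδ hd₈ hdδ hp₄ hpd) 1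
  rw [sub_neg_eq_add] at hB
  have hB_even : 2 ∣ B ^ 2 + d := by
    have := Int.sq_mod_four_eq_one_of_odd (Int.odd_iff.2 hB₂)
    omega
  have h2p : IsCoprime (2 : ℤ) p := Int.isCoprime_two_left.2 (hp₂.natCast (R := ℤ))
  have := hp.pos
  exact ⟨d, B, by omega, by omega, hB₂, by omega, hpd ▸ h2p.mul_dvd hB_even hB⟩

end Jacobi

section TernaryForms

/-- Dirichlet's ternary form, which represents `n` at its third basis vector. It is used with
`C = d * n - δ` and `B ^ 2 + d = C * A`, which gives it determinant `δ`. -/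
def dirichletGram (A B C n : ℤ) : Matrix (Fin 3) (Fin 3) ℤ := ternaryGram A C n 0 1 B

lemma dotProduct_dirichletGram_mulVec (A B C n : ℤ) :
    ![0, 0, 1] ⬝ᵥ dirichletGram A B C n *ᵥ ![0, 0, 1] = n := by
  rw [dirichletGram, dotProduct_ternaryGram_mulVec]
  simp

variable {A B C n d e δ : ℤ}

lemma det_dirichletGram (hC : C = d * n - δ) (hA : B ^ 2 + d = C * A) :
    (dirichletGram A B C n).det = δ := by
  rw [dirichletGram, det_ternaryGram]
  linear_combination -n * hA - hC

lemma posDef_dirichletGram (hd : 0 < d) (hδ : 0 < δ) (hC_pos : 0 < C) (hC : C = d * n - δ)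
    (hA : B ^ 2 + d = C * A) : (dirichletGram A B C n).PosDef := by
  refine posDef_of_leading_minors_pos (isHermitian_ternaryGram ..) ?_ ?_ ?_
  · exact pos_of_mul_pos_right (hA ▸ by positivity) hC_pos.le
  · simp only [projGram, dirichletGram, ternaryGram, of_apply, cons_val]
    linarith
  · rwa [det_dirichletGram hC hA]

lemma AnisotropicModFour.of_ternaryGram {a b c r s t : ℤ}
    (h : ∀ x y z : ZMod 4, a * x ^ 2 + b * y ^ 2 + c * z ^ 2 +
      2 * (r * y * z + s * x * z + t * x * y) = 0 → 2 * x = 0 ∧ 2 * y = 0 ∧ 2 * z = 0) :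
    AnisotropicModFour (ternaryGram a b c r s t) := by
  intro v hv
  rw [map_ternaryGram, dotProduct_ternaryGram_mulVec] at hv
  obtain ⟨h₀, h₁, h₂⟩ := h (v 0) (v 1) (v 2) hv
  ext i
  fin_cases i <;> simpa

lemma intCast_zmod_four_eq {a r : ℤ} (h : a % 4 = r) : (a : ZMod 4) = r :=
  h ▸ (ZMod.intCast_mod a 4).symm

lemma anisotropicModFour_dirichletGram_of_even (he : e % 4 = 1) (hB : B % 2 = 0)
    (hn : n % 4 = 2 ∨ n % 4 = 3) (hC : C = 2 * e * n - 3) (hA : B ^ 2 + 2 * e = C * A) :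
    AnisotropicModFour (dirichletGram A B C n) := by
  have he₄ : (e : ZMod 4) = 1 := mod_cast intCast_zmod_four_eq he
  have hB₄ : 2 * (B : ZMod 4) = 0 :=
    mod_cast intCast_zmod_four_eq (show 2 * B % 4 = 0 by omega)
  have hn₄ : (n : ZMod 4) = 2 ∨ (n : ZMod 4) = 3 :=
    hn.imp (mod_cast intCast_zmod_four_eq ·) (mod_cast intCast_zmod_four_eq ·)
  have hC₄ : (C : ZMod 4) = 2 * n - 3 := by
    rw [hC]
    push_cast
    rw [he₄, mul_one]
  have hA₄ : (A : ZMod 4) = 2 := by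
    have hmod := congrArg (Int.cast : ℤ → ZMod 4) hA
    push_cast at hmod
    rw [he₄, hC₄] at hmod
    generalize (A : ZMod 4) = a, (B : ZMod 4) = b, (n : ZMod 4) = n at hmod hB₄ ⊢
    clear * - hB₄ hmod
    decide +revert
  refine .of_ternaryGram ?_
  rw [hA₄, hC₄]
  generalize (B : ZMod 4) = b, (n : ZMod 4) = n at hB₄ hn₄ ⊢
  clear * - hB₄ hn₄
  push_cast
  decide +revert

theorem exists_sum_three_squares {n : ℕ} (h₄ : n % 4 ≠ 0) (h₈ : n % 8 ≠ 7) :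
    ∃ x y z : ℤ, (n : ℤ) = x ^ 2 + y ^ 2 + z ^ 2 := by
  obtain ⟨d, B, hd, hC_pos, A, hA⟩ :
      ∃ d B : ℤ, 0 < d ∧ 0 < d * n - 1 ∧ d * n - 1 ∣ B ^ 2 + d := by
    obtain h | h : (n % 4 = 1 ∨ n % 4 = 2) ∨ n % 8 = 3 := by omega
    · obtain ⟨e, B, he, -, -, hC_pos, hB⟩ := exists_dvd_sq_add_two_mul (δ := 1) (n := n) odd_one
        (by omega) isCoprime_one_right (by omega)
      exact ⟨2 * e, B, by omega, hC_pos, hB⟩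
    · obtain ⟨d, B, hd, -, -, hC_pos, hB⟩ := exists_dvd_sq_add (δ := 1) (n := n) odd_one
        isCoprime_one_right (by omega)
      exact ⟨d, B, hd, hC_pos, hB⟩
  rw [← dotProduct_dirichletGram_mulVec A B (d * n - 1) n]
  exact exists_sum_three_squares_of_posDef (posDef_dirichletGram hd one_pos hC_pos rfl hA)
    (det_dirichletGram rfl hA) _

lemma anisotropicModFour_dirichletGram_of_odd (hd : d % 8 = 1) (hB : B % 2 = 1)
    (hn : n % 8 = 1) (hC : C = d * n - 3) (hA : B ^ 2 + d = C * A) :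
    AnisotropicModFour (dirichletGram A B C n) := by
  have hC₈ : C % 8 = 6 := by
    rw [hC, Int.sub_emod, Int.mul_emod, hd, hn]
    rfl
  have hA_mod : A % 4 = 3 := by
    have hB₈ := Int.eight_dvd_sq_sub_one_of_odd (Int.odd_iff.2 hB)
    have hCA : C * A = 8 * (C / 8 * A) + 6 * A := by
      linear_combination A * (Int.mul_ediv_add_emod C 8).symm + A * hC₈
    omega
  have hA₄ : (A : ZMod 4) = 3 := mod_cast intCast_zmod_four_eq hA_mod
  have hB₄ : 2 * (B : ZMod 4) = 2 :=
    mod_cast intCast_zmod_four_eq (show 2 * B % 4 = 2 by omega)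
  have hn₄ : (n : ZMod 4) = 1 := mod_cast intCast_zmod_four_eq (show n % 4 = 1 by omega)
  have hC₄ : (C : ZMod 4) = 2 := mod_cast intCast_zmod_four_eq (show C % 4 = 2 by omega)
  refine .of_ternaryGram ?_
  rw [hA₄, hC₄, hn₄]
  generalize (B : ZMod 4) = b at hB₄ ⊢
  clear * - hB₄
  push_cast
  decide +revert

lemma exists_sq_add_two_mul_of_three_dvd {n : ℕ} (h₃ : 3 ∣ n) (h₄ : n % 4 ≠ 0) (h₈ : n % 8 ≠ 5) :
    ∃ x y z : ℤ, (n : ℤ) = x ^ 2 + 2 * (y ^ 2 + y * z + z ^ 2) := by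
  obtain ⟨m, rfl⟩ := h₃
  obtain ⟨a, b, c, hm⟩ := exists_sum_three_squares (n := m) (by omega) (by omega)
  refine ⟨a + b + c, a - b, b - c, ?_⟩
  push_cast
  rw [hm]
  ring

lemma exists_sq_add_two_mul_of_not_three_dvd {n : ℕ} (h₃ : ¬ 3 ∣ n) (h₄ : n % 4 ≠ 0)
    (h₈ : n % 8 ≠ 5) : ∃ x y z : ℤ, (n : ℤ) = x ^ 2 + 2 * (y ^ 2 + y * z + z ^ 2) := by
  have hcop : IsCoprime (n : ℤ) (3 : ℕ) := Nat.isCoprime_iff_coprime.2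
    ((Nat.prime_three.coprime_iff_not_dvd.2 h₃).symm)
  obtain ⟨d, A, B, hd, hC_pos, hA, hM₄⟩ : ∃ d A B : ℤ, 0 < d ∧ 0 < d * n - 3 ∧
      B ^ 2 + d = (d * n - 3) * A ∧ AnisotropicModFour (dirichletGram A B (d * n - 3) n) := by
    obtain h | h : (n % 4 = 2 ∨ n % 4 = 3) ∨ n % 8 = 1 := by omega
    · obtain ⟨e, B, he, he₄, hB₂, hC_pos, A, hA⟩ := exists_dvd_sq_add_two_mul (δ := 3) (n := n)
        (by decide) (by omega) hcop (by omega)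
      exact ⟨2 * e, A, B, by omega, hC_pos, hA,
        anisotropicModFour_dirichletGram_of_even he₄ hB₂ (by omega) rfl hA⟩
    · obtain ⟨d, B, hd, hd₈, hB₂, hC_pos, A, hA⟩ := exists_dvd_sq_add (δ := 3) (n := n)
        (by decide) hcop (by omega)
      exact ⟨d, A, B, hd, hC_pos, hA,
        anisotropicModFour_dirichletGram_of_odd hd₈ hB₂ (by omega) rfl hA⟩
  rw [← dotProduct_dirichletGram_mulVec A B (d * n - 3) n]
  exact exists_sq_add_two_mul_of_posDef (posDef_dirichletGram hd three_pos hC_pos rfl hA)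
    (det_dirichletGram rfl hA) hM₄ _

theorem exists_sq_add_two_mul {n : ℕ} (h₄ : n % 4 ≠ 0) (h₈ : n % 8 ≠ 5) :
    ∃ x y z : ℤ, (n : ℤ) = x ^ 2 + 2 * (y ^ 2 + y * z + z ^ 2) := by
  by_cases h₃ : 3 ∣ n
  · exact exists_sq_add_two_mul_of_three_dvd h₃ h₄ h₈
  · exact exists_sq_add_two_mul_of_not_three_dvd h₃ h₄ h₈

lemma sq_add_two_mul_emod_eight_ne_five (x y z : ℤ) :
    (x ^ 2 + 2 * (y ^ 2 + y * z + z ^ 2)) % 8 ≠ 5 := by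
  have hmod : ∀ x y z : ZMod 8, x ^ 2 + 2 * (y ^ 2 + y * z + z ^ 2) ≠ 5 := by decide
  intro h
  have hcast := (ZMod.intCast_eq_intCast_iff' _ 5 8).2 h
  push_cast at hcast
  exact hmod x y z hcast

end TernaryForms

section QuaternaryForm

variable {a b n : ℕ}

lemma sq_add_mul_add_sq_nonneg (z w : ℤ) : 0 ≤ z ^ 2 + z * w + w ^ 2 := by
  nlinarith [sq_nonneg (2 * z + w), sq_nonneg w]

lemma natCast_le_mul_sq (b : ℕ) {y : ℤ} (hy : y ≠ 0) : (b : ℤ) ≤ b * y ^ 2 :=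
  le_mul_of_one_le_right b.cast_nonneg ((one_le_sq_iff_one_le_abs y).2 (Int.one_le_abs hy))

lemma eq_one_of_exists_one_eq (ha : 0 < a) (hab : a ≤ b)
    (h : ∃ x y z w : ℤ, 1 = a * x ^ 2 + b * y ^ 2 + 2 * (z ^ 2 + z * w + w ^ 2)) : a = 1 := by
  obtain ⟨x, y, z, w, h⟩ := h
  by_contra ha₁
  have hN := sq_add_mul_add_sq_nonneg z w
  have hx : x = 0 := by
    by_contra hx
    have : (0 : ℤ) ≤ b * y ^ 2 := by positivity
    have := natCast_le_mul_sq a hx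
    omega
  have hy : y = 0 := by
    by_contra hy
    have : (0 : ℤ) ≤ a * x ^ 2 := by positivity
    have := natCast_le_mul_sq b hy
    omega
  simp only [hx, hy] at h
  omega

lemma le_five_of_exists_five_eq
    (h : ∃ x y z w : ℤ, 5 = x ^ 2 + b * y ^ 2 + 2 * (z ^ 2 + z * w + w ^ 2)) : b ≤ 5 := by
  obtain ⟨x, y, z, w, h⟩ := h
  have hN := sq_add_mul_add_sq_nonneg z w
  rcases eq_or_ne y 0 with rfl | hy
  · refine absurd ?_ (sq_add_two_mul_emod_eight_ne_five x z w)
    rw [zero_pow two_ne_zero, mul_zero, add_zero] at h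
    rw [← h]
    rfl
  · have := natCast_le_mul_sq b hy
    have := sq_nonneg x
    omega

lemma exists_quaternary_eq_of_mul_sq_le {y : ℕ} (hle : b * y ^ 2 ≤ n) (h₄ : (n - b * y ^ 2) % 4 ≠ 0)
    (h₈ : (n - b * y ^ 2) % 8 ≠ 5) :
    ∃ x y z w : ℤ, (n : ℤ) = x ^ 2 + b * y ^ 2 + 2 * (z ^ 2 + z * w + w ^ 2) := by
  obtain ⟨x, z, w, h⟩ := exists_sq_add_two_mul h₄ h₈
  refine ⟨x, y, z, w, ?_⟩
  push_cast [hle] at h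
  linear_combination h

lemma exists_quaternary_eq_of_mod_eight_eq_five (hb : 0 < b) (hb₅ : b ≤ 5) (hn : n % 8 = 5) :
    ∃ x y z w : ℤ, (n : ℤ) = x ^ 2 + b * y ^ 2 + 2 * (z ^ 2 + z * w + w ^ 2) := by
  obtain rfl | hb | rfl : b = 1 ∨ (b = 2 ∨ b = 3 ∨ b = 4) ∨ b = 5 := by omega
  · exact exists_quaternary_eq_of_mul_sq_le (y := 2) (by omega) (by omega) (by omega)
  · exact exists_quaternary_eq_of_mul_sq_le (y := 1) (by omega) (by omega) (by omega)
  · obtain rfl | rfl | hn₂₀ : n = 5 ∨ n = 13 ∨ 20 < n := by omega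
    · exact ⟨0, 1, 0, 0, by norm_num⟩
    · exact ⟨0, 1, 2, 0, by norm_num⟩
    · exact exists_quaternary_eq_of_mul_sq_le (y := 2) (by omega) (by omega) (by omega)

theorem exists_quaternary_eq (hb : 0 < b) (hb₅ : b ≤ 5) (n : ℕ) :
    ∃ x y z w : ℤ, (n : ℤ) = x ^ 2 + b * y ^ 2 + 2 * (z ^ 2 + z * w + w ^ 2) := by
  induction n using Nat.strong_induction_on with
  | _ n ih =>
    obtain rfl | hn := n.eq_zero_or_pos
    · exact ⟨0, 0, 0, 0, by norm_num⟩
    by_cases h₄ : n % 4 = 0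
    · obtain ⟨m, rfl⟩ := Nat.dvd_of_mod_eq_zero h₄
      obtain ⟨x, y, z, w, hm⟩ := ih m (by omega)
      refine ⟨2 * x, 2 * y, 2 * z, 2 * w, ?_⟩
      push_cast
      linear_combination 4 * hm
    by_cases h₈ : n % 8 = 5
    · exact exists_quaternary_eq_of_mod_eight_eq_five hb hb₅ h₈
    · exact exists_quaternary_eq_of_mul_sq_le (y := 0) (by simp) (by simpa using h₄)
        (by simpa using h₈)

end QuaternaryForm

theorem stmt_10 (a b : ℕ) (ha : 0 < a) (hb : 0 < b) (hab : a ≤ b)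
    (h : ∀ n ∈ ({1, 5} : Set ℕ), ∃ x y z w : ℤ,
      (n : ℤ) = a * x ^ 2 + b * y ^ 2 + 2 * (z ^ 2 + z * w + w ^ 2)) :
    ∀ n : ℕ, ∃ x y z w : ℤ,
      (n : ℤ) = a * x ^ 2 + b * y ^ 2 + 2 * (z ^ 2 + z * w + w ^ 2) := by
  obtain rfl := eq_one_of_exists_one_eq ha hab (mod_cast h 1 (by simp))
  simp only [Nat.cast_one, one_mul] at h ⊢
  have hb₅ := le_five_of_exists_five_eq (mod_cast h 5 (by simp))
  exact exists_quaternary_eq hb hb₅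
end

section
/- A nonnegative integer n can be written as x² + 2·(y² + y·z + z²) with x, y, z ∈ ℤ if and only if n is not of the form 4^k·(8·l + 5) for nonnegative integers k and l. -/
/-!
The form `x² + 2(y² + yz + z²)` is Euclidean: every rational vector has distance less than `1` from
an integral one. By the Davenport–Cassels argument it then represents over `ℤ` every integer that it
represents over `ℚ`. Factors `4^k` are therefore irrelevant, and the values `5` modulo `8` are
excluded by a congruence.

If `4 ∤ n` and `n ≢ 5 (mod 8)`, let `m` be the odd part of `n`. Dirichlet's theorem provides a prime
`p` with `2p ≡ -1 (mod 3m)` and a residue modulo `8` for which quadratic reciprocity makes `n` a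
square modulo `p`. As in Ankeny's proof of the three-square theorem, `2pn` then divides
`X² + 2pS² - nT²` on a lattice of index `2pn` in `ℤ³`, and the pigeonhole principle yields a nonzero
lattice vector at which the value is `0` or `2pn`. In both cases `n` is represented by `X² + 2pS²`
over `ℚ`. Since `p ≡ 1 (mod 3)` is of the form `y² + yz + z²`, the form represents `n` over `ℚ`.
-/

open QuadraticMap
open scoped NumberTheorySymbols

section Euclidean

lemma map_sub_smul {R M : Type*} [CommRing R] [AddCommGroup M] [Module R M]
    (Q : QuadraticForm R M) (v w : M) (T : R) :
    Q (v - T • w) = Q v - T * polar Q v w + T ^ 2 * Q w := by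
  rw [sub_eq_add_neg, QuadraticMap.map_add Q, Q.map_neg, Q.map_smul, polar_neg_right,
    polar_smul_right]
  simp only [smul_eq_mul]
  ring

-- The line through `v / T` and `w` meets the quadric `Q = n` again in a point with denominator
-- `n * T - polar Q v w + T * Q w`, which is `T * Q (v / T - w)`.
lemma map_second_intersection {R M : Type*} [CommRing R] [AddCommGroup M] [Module R M]
    {Q : QuadraticForm R M} {n T : R} {v : M} (hv : Q v = n * T ^ 2) (w : M) :
    Q ((Q w - n) • v + (2 * n * T - polar Q v w) • w) =
      n * (n * T - polar Q v w + T * Q w) ^ 2 := by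
  rw [QuadraticMap.map_add Q, Q.map_smul, Q.map_smul, polar_smul_left, polar_smul_right, hv]
  simp only [smul_eq_mul]
  ring

variable {M : Type*} [AddCommGroup M] {Q : QuadraticForm ℤ M}

/-- Euclidean integral quadratic forms in the sense of P. L. Clark: every vector with rational
coordinates is at `Q`-distance less than `1` from an integral vector. The rational vector is written
`v / T`, and the inequality is multiplied by `T ^ 2`. -/
def IsEuclidean (Q : QuadraticForm ℤ M) : Prop :=
  ∀ (v : M) ⦃T : ℤ⦄, T ≠ 0 → ∃ w : M, |Q (v - T • w)| < T ^ 2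

/-- The **Davenport–Cassels lemma**. -/
theorem IsEuclidean.exists_eq_of_eq_mul_sq (hQ : IsEuclidean Q) (hanis : Q.Anisotropic)
    {n T : ℤ} {v : M} (hT : T ≠ 0) (hv : Q v = n * T ^ 2) : ∃ w : M, Q w = n := by
  induction hk : T.natAbs using Nat.strong_induction_on generalizing v T with
  | _ k ih =>
  obtain ⟨w, hw⟩ := hQ v hT
  set T' := n * T - polar Q v w + T * Q w with hT'
  have hdist : Q (v - T • w) = T * T' := by
    rw [map_sub_smul, hv, hT']
    ring
  rcases eq_or_ne T' 0 with h0 | h0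
  · have hvw : v = T • w := sub_eq_zero.1 (hanis _ (by rw [hdist, h0, mul_zero]))
    refine ⟨w, mul_left_cancel₀ (pow_ne_zero 2 hT) ?_⟩
    rw [mul_comm (T ^ 2) n, ← hv, hvw, Q.map_smul, smul_eq_mul, pow_two]
  · have hlt : |T'| < |T| := by
      rw [hdist, abs_mul, ← sq_abs T, pow_two] at hw
      exact lt_of_mul_lt_mul_left hw (abs_nonneg T)
    exact ih T'.natAbs (by zify [← hk]; exact hlt) h0 (map_second_intersection hv w) rfl

-- Choose `w` with `Q (v - T • w)` minimal and compare it with `w + e` and `w - e`.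
lemma exists_abs_polar_sub_smul_le (hQ : ∀ x, 0 ≤ Q x) (v : M) {T : ℤ} (hT : T ≠ 0) :
    ∃ w : M, ∀ e : M, |polar Q (v - T • w) e| ≤ |T| * Q e := by
  let dist (w : M) : ℕ := (Q (v - T • w)).toNat
  refine ⟨Function.argmin dist, fun e ↦ ?_⟩
  set w := Function.argmin dist
  have hmin (e : M) : T * polar Q (v - T • w) e ≤ T ^ 2 * Q e := by
    have hle : Q (v - T • w) ≤ Q (v - T • (w + e)) := by
      simpa [dist, hQ] using Function.argmin_le (f := dist) (w + e)
    rw [smul_add, ← sub_sub, map_sub_smul Q (v - T • w) e] at hle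
    linarith
  have habs : |T| * |polar Q (v - T • w) e| ≤ |T| * (|T| * Q e) := by
    have hneg := hmin (-e)
    rw [polar_neg_right, Q.map_neg] at hneg
    rw [← abs_mul, ← mul_assoc, abs_mul_abs_self, ← pow_two, abs_le']
    exact ⟨hmin e, by linarith⟩
  exact le_of_mul_le_mul_left habs (abs_pos.2 hT)

end Euclidean

/-- The norm form `y² + yz + z²` of the hexagonal lattice. -/
def hexagonalForm : QuadraticForm ℤ (ℤ × ℤ) :=
  linMulLin (.fst ℤ ℤ ℤ) (.fst ℤ ℤ ℤ) + linMulLin (.fst ℤ ℤ ℤ) (.snd ℤ ℤ ℤ) +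
    linMulLin (.snd ℤ ℤ ℤ) (.snd ℤ ℤ ℤ)

/-- The ternary form `x² + 2(y² + yz + z²)`. -/
def ternaryForm : QuadraticForm ℤ (ℤ × ℤ × ℤ) := sq.prod (2 • hexagonalForm)

lemma hexagonalForm_apply (y z : ℤ) : hexagonalForm (y, z) = y ^ 2 + y * z + z ^ 2 := by
  simp [hexagonalForm, pow_two]

lemma ternaryForm_apply (x : ℤ) (r : ℤ × ℤ) :
    ternaryForm (x, r) = x ^ 2 + 2 * hexagonalForm r := by
  simp [ternaryForm, pow_two]

lemma polar_ternaryForm (x x' : ℤ) (r r' : ℤ × ℤ) :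
    polar ternaryForm (x, r) (x', r') = 2 * (x * x') + 2 * polar hexagonalForm r r' := by
  simp only [polar, Prod.mk_add_mk, ternaryForm_apply]
  ring

lemma hexagonalForm_posDef : hexagonalForm.PosDef := by
  rintro ⟨y, z⟩ hne
  rw [hexagonalForm_apply]
  by_contra! hle
  have hy : y = 0 := by nlinarith [sq_nonneg y, sq_nonneg (y + 2 * z)]
  have hz : z = 0 := by nlinarith [sq_nonneg z, sq_nonneg (2 * y + z)]
  exact hne (by rw [hy, hz, Prod.mk_zero_zero])

lemma ternaryForm_posDef : ternaryForm.PosDef :=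
  (linMulLinSelfPosDef .id LinearMap.ker_id).prod (hexagonalForm_posDef.smul two_pos)

-- Among `x`, `y` and `-(x + y)` two have the same sign, and the square of the third is then at
-- least the sum of their squares.
lemma sq_add_sq_add_sq_add_le {R : Type*} [CommRing R] [LinearOrder R] [IsStrictOrderedRing R]
    {x y t : R} (hx : x ^ 2 ≤ t) (hy : y ^ 2 ≤ t) (hxy : (x + y) ^ 2 ≤ t) :
    x ^ 2 + y ^ 2 + (x + y) ^ 2 ≤ 2 * t := by
  obtain h | h | h : 0 ≤ x * y ∨ x * (x + y) ≤ 0 ∨ y * (x + y) ≤ 0 := by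
    by_contra! h
    nlinarith [mul_pos h.2.1 h.2.2, mul_nonneg (sq_nonneg (x + y)) (neg_pos.2 h.1).le]
  all_goals linarith

-- A point that is no farther from the origin than from any other point of `t • ℤ²` lies in the
-- Voronoi hexagon, whose circumradius is `t / √3`.
lemma three_mul_hexagonalForm_le {r : ℤ × ℤ} {t : ℤ}
    (hr : ∀ e, |polar hexagonalForm r e| ≤ t * hexagonalForm e) :
    3 * hexagonalForm r ≤ t ^ 2 := by
  obtain ⟨a, b⟩ := r
  have hsq {e : ℤ × ℤ} (he : hexagonalForm e = 1) : polar hexagonalForm (a, b) e ^ 2 ≤ t ^ 2 :=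
    sq_le_sq' (abs_le.1 (by simpa [he] using hr e)).1 (abs_le.1 (by simpa [he] using hr e)).2
  have h₁ := hsq (e := (0, 1)) (by simp [hexagonalForm_apply])
  have h₂ := hsq (e := (1, -1)) (by simp [hexagonalForm_apply])
  have h₃ := hsq (e := (1, 0)) (by simp [hexagonalForm_apply])
  simp only [polar, Prod.mk_add_mk, hexagonalForm_apply] at h₁ h₂ h₃ ⊢
  have h := sq_add_sq_add_sq_add_le (x := a + 2 * b) (y := a - b) (t := t ^ 2)
    (by linarith) (by linarith) (by linarith)
  linarith

lemma ternaryForm_isEuclidean : IsEuclidean ternaryForm := by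
  intro v T hT
  obtain ⟨w, hw⟩ := exists_abs_polar_sub_smul_le ternaryForm_posDef.nonneg v hT
  refine ⟨w, ?_⟩
  generalize v - T • w = u at hw ⊢
  obtain ⟨x, r⟩ := u
  have hx : |2 * x| ≤ |T| := by
    simpa [polar_ternaryForm, ternaryForm_apply] using hw (1, 0)
  have hx' : 4 * x ^ 2 ≤ T ^ 2 := by
    linarith [sq_le_sq.2 hx]
  have hr : 3 * hexagonalForm r ≤ T ^ 2 := by
    rw [← sq_abs T]
    refine three_mul_hexagonalForm_le fun e ↦ ?_
    have h := hw (0, e)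
    rw [polar_ternaryForm, ternaryForm_apply] at h
    simp only [mul_zero, zero_add, abs_mul, Nat.abs_ofNat, pow_two] at h
    linarith
  rw [abs_of_nonneg (ternaryForm_posDef.nonneg _), ternaryForm_apply]
  have hT2 : 0 < T ^ 2 := by positivity
  linarith

lemma hexagonalForm_emod_four_ne_two (r : ℤ × ℤ) : hexagonalForm r % 4 ≠ 2 := by
  have h : ∀ y z : ZMod 4, y ^ 2 + y * z + z ^ 2 ≠ 2 := by decide
  intro hr
  rw [hexagonalForm_apply r.1 r.2] at hr
  refine h r.1 r.2 ?_
  have := (ZMod.intCast_eq_intCast_iff' _ 2 4).2 hr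
  push_cast at this
  exact this

lemma ternaryForm_emod_eight_ne_five (v : ℤ × ℤ × ℤ) : ternaryForm v % 8 ≠ 5 := by
  obtain ⟨x, r⟩ := v
  rw [ternaryForm_apply]
  intro h
  have hr := hexagonalForm_emod_four_ne_two r
  have hx : Odd x := by
    rw [← Int.odd_pow' two_ne_zero, Int.odd_iff]
    omega
  have hx8 := Int.eight_dvd_sq_sub_one_of_odd hx
  omega

section Pigeonhole

variable {ι G : Type*} [Fintype ι] [AddCommGroup G] [Fintype G]

lemma exists_sum_zsmul_eq_zero_abs_lt (g : ι → G) (b : ι → ℕ) (h : Fintype.card G < ∏ i, b i) :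
    ∃ v : ι → ℤ, v ≠ 0 ∧ ∑ i, v i • g i = 0 ∧ ∀ i, |v i| < b i := by
  classical
  obtain ⟨x, y, hne, hxy⟩ := Fintype.exists_ne_map_eq_of_card_lt
    (fun x : ∀ i, Fin (b i) ↦ ∑ i, (x i : ℤ) • g i) (by simpa [Fintype.card_pi] using h)
  refine ⟨fun i ↦ x i - y i, fun h0 ↦ hne (funext fun i ↦ Fin.ext ?_), ?_, fun i ↦ ?_⟩
  · have := congrFun h0 i
    simp only [Pi.zero_apply] at this
    omega
  · simpa only [sub_smul, Finset.sum_sub_distrib, sub_eq_zero] using hxy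
  · exact abs_sub_lt_of_nonneg_of_lt (by positivity) (by simp) (by positivity) (by simp)

lemma exists_sum_zsmul_eq_zero_sq_lt (g : ι → G) (B : ι → ℕ)
    (h : Fintype.card G ^ 2 < ∏ i, B i) :
    ∃ v : ι → ℤ, v ≠ 0 ∧ ∑ i, v i • g i = 0 ∧ ∀ i, v i ^ 2 < B i := by
  have hB (i : ι) : 0 < B i := by
    refine Nat.pos_of_ne_zero fun h0 ↦ ?_
    simp [Finset.prod_eq_zero (Finset.mem_univ i) h0] at h
  -- `(B i - 1).sqrt + 1` is the square root of `B i`, rounded up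
  obtain ⟨v, hne, hv, hlt⟩ := exists_sum_zsmul_eq_zero_abs_lt g (fun i ↦ (B i - 1).sqrt + 1) (by
    refine lt_of_pow_lt_pow_left₀ 2 (Nat.zero_le _) (h.trans_le ?_)
    rw [← Finset.prod_pow]
    refine Finset.prod_le_prod' fun i _ ↦ ?_
    have := Nat.lt_succ_sqrt' (B i - 1)
    rw [Nat.succ_eq_add_one] at this
    omega)
  refine ⟨v, hne, hv, fun i ↦ ?_⟩
  have hle : (v i).natAbs ≤ (B i - 1).sqrt := by
    have := hlt i
    rw [Int.abs_eq_natAbs] at this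
    omega
  have := Nat.le_sqrt'.1 hle
  have := hB i
  rw [← Int.natAbs_sq]
  norm_cast
  omega

end Pigeonhole

lemma exists_sq_add_self_add_one_eq_zero {F : Type*} [Field F] [Fintype F]
    (h : Fintype.card F % 3 = 1) : ∃ w : F, w ^ 2 + w + 1 = 0 := by
  classical
  have h3 : 3 ∣ Fintype.card Fˣ := by
    rw [Fintype.card_units]
    omega
  obtain ⟨g, hg⟩ := exists_prime_orderOf_dvd_card 3 h3
  have hw : IsPrimitiveRoot (g : F) 3 := IsPrimitiveRoot.coe_units_iff.2 (hg ▸ .orderOf g)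
  refine ⟨g, ?_⟩
  have := hw.geom_sum_eq_zero (by norm_num)
  simp only [Finset.sum_range_succ, Finset.sum_range_zero] at this
  linear_combination this

theorem exists_hexagonalForm_eq_prime {p : ℕ} [Fact p.Prime] (h3 : p % 3 = 1) :
    ∃ r, hexagonalForm r = p := by
  have hp := (Fact.out : p.Prime)
  obtain ⟨w, hw⟩ := exists_sq_add_self_add_one_eq_zero (F := ZMod p) (by rwa [ZMod.card])
  obtain ⟨v, hne, hv, hlt⟩ := exists_sum_zsmul_eq_zero_sq_lt ![1, -w] ![p, p + 1] (by
    simp only [ZMod.card, Fin.prod_univ_two, Matrix.cons_val_zero, Matrix.cons_val_one]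
    nlinarith [hp.pos])
  simp only [Fin.sum_univ_two, Matrix.cons_val_zero, Matrix.cons_val_one, zsmul_eq_mul] at hv
  have hv0 := hlt 0
  have hv1 := hlt 1
  simp only [Matrix.cons_val_zero, Matrix.cons_val_one] at hv0 hv1
  have hpos : 0 < hexagonalForm (v 0, v 1) := by
    refine hexagonalForm_posDef _ fun h0 ↦ hne ?_
    ext i
    fin_cases i <;> simp_all
  obtain ⟨k, hk⟩ : (p : ℤ) ∣ hexagonalForm (v 0, v 1) := by
    rw [hexagonalForm_apply, ← ZMod.intCast_zmod_eq_zero_iff_dvd]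
    push_cast
    linear_combination (v 0 + v 1 * w + v 1 : ZMod p) * hv + (v 1 : ZMod p) ^ 2 * hw
  have hp0 : (0 : ℤ) < p := mod_cast hp.pos
  have hk0 : 0 < k := pos_of_mul_pos_right (hk ▸ hpos) hp0.le
  have hk3 : k < 3 := by
    refine lt_of_mul_lt_mul_left (a := (p : ℤ)) ?_ hp0.le
    rw [← hk, hexagonalForm_apply]
    push_cast at hv1
    nlinarith [sq_nonneg (v 0 - v 1)]
  obtain rfl | rfl : k = 1 ∨ k = 2 := by omega
  · exact ⟨_, by rw [hk, mul_one]⟩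
  · have := hexagonalForm_emod_four_ne_two (v 0, v 1)
    have := hp.eq_two_or_odd
    omega

/-- `n` is represented by the binary form `x² + d s²` over the rational numbers. The rational
solution is written `(X / T, S / T)`, and denominators are cleared. -/
def IsRatSqAddMulSq (d n : ℤ) : Prop :=
  ∃ X S T : ℤ, T ≠ 0 ∧ X ^ 2 + d * S ^ 2 = n * T ^ 2

lemma isRatSqAddMulSq_of_sub_eq_zero_or_eq {n d X S T : ℤ} (hd : 0 < d)
    (hne : ¬(X = 0 ∧ S = 0 ∧ T = 0))
    (h : X ^ 2 + d * S ^ 2 - n * T ^ 2 = 0 ∨ X ^ 2 + d * S ^ 2 - n * T ^ 2 = d * n) :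
    IsRatSqAddMulSq d n := by
  rcases h with h | h
  · refine ⟨X, S, T, ?_, by linarith⟩
    rintro rfl
    have hX : X ^ 2 = 0 := by nlinarith [sq_nonneg X, mul_nonneg hd.le (sq_nonneg S)]
    have hS : d * S ^ 2 = 0 := by linarith
    exact hne ⟨by simpa using hX, by simpa [hd.ne'] using hS, rfl⟩
  · -- `n` is `X ^ 2 + d * S ^ 2` divided by `T ^ 2 + d * 1 ^ 2`: use Brahmagupta's identity
    refine ⟨X * T - d * S, X + S * T, T ^ 2 + d, by positivity, ?_⟩
    linear_combination (T ^ 2 + d) * h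

lemma isRatSqAddMulSq_of_card_eq_mul {G : Type*} [AddCommGroup G] [Fintype G] {n d : ℕ}
    (hG : Fintype.card G = d * n) (g : Fin 3 → G)
    (hg : ∀ X S T : ℤ, X • g 0 + S • g 1 + T • g 2 = 0 →
      (d * n : ℤ) ∣ X ^ 2 + d * S ^ 2 - n * T ^ 2) :
    IsRatSqAddMulSq d n := by
  have hdn : 0 < d * n := hG ▸ Fintype.card_pos
  have hd : 0 < d := Nat.pos_of_mul_pos_right hdn
  have hn : 0 < n := Nat.pos_of_mul_pos_left hdn
  obtain ⟨v, hne, hv, hlt⟩ := exists_sum_zsmul_eq_zero_sq_lt g ![d * n, n + 1, d] (by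
    simp only [hG, Fin.prod_univ_three, Matrix.cons_val_zero, Matrix.cons_val_one,
      Matrix.cons_val_two, Matrix.head_cons, Matrix.tail_cons]
    nlinarith)
  rw [Fin.sum_univ_three] at hv
  obtain ⟨k, hk⟩ := hg _ _ _ hv
  have hX : v 0 ^ 2 < d * n := by simpa using hlt 0
  have hS : v 1 ^ 2 < n + 1 := by simpa using hlt 1
  have hT : v 2 ^ 2 < d := by simpa using hlt 2
  zify at hn hd hdn
  have hdS : d * v 1 ^ 2 ≤ d * n := mul_le_mul_of_nonneg_left (by linarith) hd.le
  have hnT : n * v 2 ^ 2 < n * d := mul_lt_mul_of_pos_left hT hn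
  have hk_lt : k < 2 := lt_of_mul_lt_mul_left (a := (d * n : ℤ))
    (by linarith [mul_nonneg hn.le (sq_nonneg (v 2))]) hdn.le
  have hk_gt : -1 < k := lt_of_mul_lt_mul_left (a := (d * n : ℤ))
    (by linarith [sq_nonneg (v 0), mul_nonneg hd.le (sq_nonneg (v 1))]) hdn.le
  refine isRatSqAddMulSq_of_sub_eq_zero_or_eq (X := v 0) (S := v 1) (T := v 2) hd ?_ ?_
  · rintro ⟨h₀, h₁, h₂⟩
    exact hne (funext (Fin.forall_fin_succ.2 ⟨h₀, Fin.forall_fin_two.2 ⟨h₁, h₂⟩⟩))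
  · obtain rfl | rfl : k = 0 ∨ k = 1 := by omega
    · exact .inl (by rw [hk, mul_zero])
    · exact .inr (by rw [hk, mul_one])

lemma isRatSqAddMulSq_of_isSquare {A : Type*} [AddCommGroup A] [Fintype A] {e m p : ℕ}
    (hem : (2 * e).Coprime m) (hep : (2 * e).Coprime p) (hdvd : m ∣ 2 * p + 1)
    (hsq : IsSquare ((e * m : ℕ) : ZMod p)) (hA : Fintype.card A = 2 * e) (g : Fin 3 → A)
    (hg : ∀ X S T : ℤ, X • g 0 + S • g 1 + T • g 2 = 0 →
      (2 * e : ℤ) ∣ X ^ 2 + 2 * p * S ^ 2 - e * m * T ^ 2) :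
    IsRatSqAddMulSq (2 * p) (e * m : ℕ) := by
  have hne {q : ℕ} (hq : (2 * e).Coprime q) : q ≠ 0 := by
    rintro rfl
    rw [Nat.coprime_zero_right] at hq
    omega
  have := NeZero.mk (hne hem)
  have := NeZero.mk (hne hep)
  obtain ⟨r, hr⟩ := hsq
  have h2p : (2 * p + 1 : ZMod m) = 0 := mod_cast (ZMod.natCast_eq_zero_iff _ m).2 hdvd
  -- the last two components impose `X ≡ S` modulo `m` and `X ≡ r * T` modulo `p`
  have key := isRatSqAddMulSq_of_card_eq_mul (G := A × ZMod m × ZMod p) (n := e * m) (d := 2 * p)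
    (by simp only [Fintype.card_prod, hA, ZMod.card]; ring)
    (fun i ↦ (g i, ![1, -1, 0] i, ![1, 0, -r] i)) fun X S T h ↦ ?_
  · exact_mod_cast key
  simp only [Prod.smul_mk, Prod.mk_add_mk, Prod.mk_eq_zero, Matrix.cons_val_zero,
    Matrix.cons_val_one, Matrix.cons_val, zsmul_eq_mul] at h
  obtain ⟨hXST, hXS, hXT⟩ := h
  have hdvd_m : (m : ℤ) ∣ X ^ 2 + 2 * p * S ^ 2 - e * m * T ^ 2 := by
    rw [← ZMod.intCast_zmod_eq_zero_iff_dvd]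
    push_cast
    rw [ZMod.natCast_self]
    linear_combination (X + S : ZMod m) * hXS + (S : ZMod m) ^ 2 * h2p
  have hdvd_p : (p : ℤ) ∣ X ^ 2 + 2 * p * S ^ 2 - e * m * T ^ 2 := by
    rw [← ZMod.intCast_zmod_eq_zero_iff_dvd]
    push_cast at hr ⊢
    rw [ZMod.natCast_self]
    linear_combination (X + r * T : ZMod p) * hXT - (T : ZMod p) ^ 2 * hr
  have hem' : IsCoprime (2 * e : ℤ) m := mod_cast hem.isCoprime
  have hep' : IsCoprime (2 * e : ℤ) p := mod_cast hep.isCoprime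
  have hmp' : IsCoprime (m : ℤ) p :=
    Nat.isCoprime_iff_coprime.2 (Nat.Coprime.coprime_dvd_left hdvd (by simp))
  have := (hep'.mul_left hmp').mul_dvd (hem'.mul_dvd (hg X S T hXST) hdvd_m) hdvd_p
  rw [show ((2 * p : ℕ) * (e * m : ℕ) : ℤ) = 2 * e * m * p by push_cast; ring]
  exact_mod_cast this

lemma isRatSqAddMulSq_of_isSquare_of_odd {m p : ℕ} (hm : Odd m) (hp : Odd p)
    (hdvd : m ∣ 2 * p + 1) (hsq : IsSquare (m : ZMod p)) :
    IsRatSqAddMulSq (2 * p) m := by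
  simpa using isRatSqAddMulSq_of_isSquare (A := ZMod 2) (e := 1) (Nat.coprime_two_left.2 hm)
    (Nat.coprime_two_left.2 hp) hdvd (by simpa using hsq) (ZMod.card 2) ![1, 0, 1] fun X S T h ↦ by
      have hXT : Even (X + T) := by
        rw [← ZMod.intCast_eq_zero_iff_even]
        simpa using h
      rw [Nat.cast_one, mul_one, one_mul, ← even_iff_two_dvd]
      have : Odd (m : ℤ) := mod_cast hm
      grind [Int.even_add, Int.even_sub, Int.even_pow, Int.not_even_iff_odd]

lemma isRatSqAddMulSq_two_mul_of_isSquare {m p : ℕ} (hm : Odd m) (hp : Odd p)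
    (hdvd : m ∣ 2 * p + 1) (hsq : IsSquare ((2 * m : ℕ) : ZMod p)) :
    IsRatSqAddMulSq (2 * p) (2 * m : ℕ) := by
  refine isRatSqAddMulSq_of_isSquare (A := ZMod 2 × ZMod 2)
    ((Nat.coprime_two_left.2 hm).pow_left 2) ((Nat.coprime_two_left.2 hp).pow_left 2) hdvd hsq rfl
    ![(1, 0), (0, 1), (0, 1)] fun X S T h ↦ ?_
  simp only [Matrix.cons_val_zero, Matrix.cons_val_one, Matrix.cons_val, Prod.smul_mk,
    Prod.mk_add_mk, Prod.mk_eq_zero, smul_zero, add_zero, zero_add, zsmul_eq_mul, mul_one] at h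
  obtain ⟨a, rfl⟩ : (2 : ℤ) ∣ X := (ZMod.intCast_zmod_eq_zero_iff_dvd X 2).1 h.1
  have hST : Even (S + T) := by
    rw [← ZMod.intCast_eq_zero_iff_even]
    exact_mod_cast h.2
  have hm' : Odd (m : ℤ) := mod_cast hm
  have hp' : Odd (p : ℤ) := mod_cast hp
  obtain ⟨b, hb⟩ : Even (p * S ^ 2 - m * T ^ 2 : ℤ) := by
    grind [Int.even_add, Int.even_sub, Int.even_pow, Int.not_even_iff_odd]
  exact ⟨a ^ 2 + b, by push_cast; linear_combination 2 * hb⟩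

lemma odd_of_modEq_eight {a c : ℕ} (hc : Odd c) (h : a ≡ c [MOD 8]) : Odd a := by
  rw [Nat.odd_iff] at hc ⊢
  rw [← hc]
  exact h.of_dvd (by norm_num)

lemma exists_prime_modEq_eight_dvd {M c : ℕ} (hM : Odd M) (hc : Odd c) :
    ∃ p : ℕ, p.Prime ∧ p ≡ c [MOD 8] ∧ M ∣ 2 * p + 1 := by
  have h8 : Nat.Coprime 8 M := (Nat.coprime_two_left.2 hM).pow_left 3
  obtain ⟨h, rfl⟩ := hM
  obtain ⟨a, ha8, haM⟩ := Nat.chineseRemainder h8 c h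
  have hdvd {q : ℕ} (hq : q ≡ h [MOD 2 * h + 1]) : 2 * h + 1 ∣ 2 * q + 1 :=
    (((hq.mul_left 2).add_right 1).dvd_iff dvd_rfl).2 dvd_rfl
  have ha_odd : Odd a := odd_of_modEq_eight hc ha8
  have hcop : a.Coprime (8 * (2 * h + 1)) := by
    refine .mul_right ((Nat.coprime_two_right.2 ha_odd).pow_right 3) ?_
    exact (by simp : a.Coprime (2 * a + 1)).coprime_dvd_right (hdvd haM)
  obtain ⟨p, -, hp, hpa⟩ := Nat.forall_exists_prime_gt_and_modEq 0 (by omega) hcop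
  exact ⟨p, hp, (hpa.of_mul_right _).trans ha8, hdvd ((hpa.of_mul_left _).trans haM)⟩

lemma exists_prime_mod_three_modEq_eight_dvd {m c : ℕ} (hm : Odd m) (hc : Odd c) :
    ∃ p : ℕ, p.Prime ∧ p % 3 = 1 ∧ Odd p ∧ p ≡ c [MOD 8] ∧ m ∣ 2 * p + 1 := by
  obtain ⟨p, hp, hp8, hdvd⟩ := exists_prime_modEq_eight_dvd (.mul (by decide : Odd 3) hm) hc
  have h3 : 3 ∣ 2 * p + 1 := dvd_of_mul_right_dvd hdvd
  exact ⟨p, hp, by omega, odd_of_modEq_eight hc hp8, hp8, dvd_of_mul_left_dvd hdvd⟩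

lemma jacobiSym_eq_jacobiSym_neg_two {m p : ℕ} (h : m ∣ 2 * p + 1) : J(p | m) = J(-2 | m) := by
  have hmul : J(-2 | m) * J(p | m) = 1 := by
    rw [← jacobiSym.mul_left, ← jacobiSym.one_left m]
    refine jacobiSym.mod_left' ((Int.modEq_iff_dvd.2 ?_).eq)
    have : (m : ℤ) ∣ 2 * p + 1 := mod_cast h
    convert this using 1
    ring
  rcases Int.mul_eq_one_iff_eq_one_or_neg_one.1 hmul with ⟨h₁, h₂⟩ | ⟨h₁, h₂⟩ <;> rw [h₁, h₂]

lemma jacobiSym_eq_one_of_mod_eight_ne_five {n p : ℕ} (hn : Odd n) (h5 : n % 8 ≠ 5)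
    (hp : p ≡ if n % 8 = 7 then 3 else 1 [MOD 8]) (hdvd : n ∣ 2 * p + 1) : J(n | p) = 1 := by
  have hp_odd : Odd p := odd_of_modEq_eight (by split_ifs <;> decide) hp
  rw [← jacobiSym.quadratic_reciprocity_if (Nat.odd_iff.1 hn) (Nat.odd_iff.1 hp_odd),
    jacobiSym_eq_jacobiSym_neg_two hdvd, jacobiSym.at_neg_two hn, ZMod.χ₈'_nat_eq_if_mod_eight]
  unfold Nat.ModEq at hp
  rw [Nat.odd_iff] at hn
  split_ifs at hp ⊢ <;> omega

lemma jacobiSym_two_mul_eq_one {m p : ℕ} (hm : Odd m)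
    (hp : p ≡ if m % 8 = 1 ∨ m % 8 = 3 then 1 else 5 [MOD 8]) (hdvd : m ∣ 2 * p + 1) :
    J((2 * m : ℕ) | p) = 1 := by
  have hp_odd : Odd p := odd_of_modEq_eight (by split_ifs <;> decide) hp
  rw [Nat.cast_mul, jacobiSym.mul_left, Nat.cast_two, jacobiSym.at_two hp_odd,
    ← jacobiSym.quadratic_reciprocity_if (Nat.odd_iff.1 hm) (Nat.odd_iff.1 hp_odd),
    jacobiSym_eq_jacobiSym_neg_two hdvd, jacobiSym.at_neg_two hm, ZMod.χ₈_nat_eq_if_mod_eight,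
    ZMod.χ₈'_nat_eq_if_mod_eight]
  unfold Nat.ModEq at hp
  rw [Nat.odd_iff] at hm
  split_ifs at hp ⊢ <;> omega

lemma exists_prime_isRatSqAddMulSq_of_odd {n : ℕ} (hn : Odd n) (h5 : n % 8 ≠ 5) :
    ∃ p : ℕ, p.Prime ∧ p % 3 = 1 ∧ IsRatSqAddMulSq (2 * p) n := by
  have hc : Odd (if n % 8 = 7 then 3 else 1) := by split_ifs <;> decide
  obtain ⟨p, hp, hp3, hp_odd, hp8, hdvd⟩ := exists_prime_mod_three_modEq_eight_dvd hn hc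
  have := Fact.mk hp
  have hJ := jacobiSym_eq_one_of_mod_eight_ne_five hn h5 hp8 hdvd
  exact ⟨p, hp, hp3, isRatSqAddMulSq_of_isSquare_of_odd hn hp_odd hdvd
    (mod_cast ZMod.isSquare_of_jacobiSym_eq_one hJ)⟩

lemma exists_prime_isRatSqAddMulSq_two_mul {m : ℕ} (hm : Odd m) :
    ∃ p : ℕ, p.Prime ∧ p % 3 = 1 ∧ IsRatSqAddMulSq (2 * p) (2 * m : ℕ) := by
  have hc : Odd (if m % 8 = 1 ∨ m % 8 = 3 then 1 else 5) := by split_ifs <;> decide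
  obtain ⟨p, hp, hp3, hp_odd, hp8, hdvd⟩ := exists_prime_mod_three_modEq_eight_dvd hm hc
  have := Fact.mk hp
  have hJ := jacobiSym_two_mul_eq_one hm hp8 hdvd
  exact ⟨p, hp, hp3, isRatSqAddMulSq_two_mul_of_isSquare hm hp_odd hdvd
    (mod_cast ZMod.isSquare_of_jacobiSym_eq_one hJ)⟩

theorem exists_ternaryForm_eq {n : ℕ} (h4 : n % 4 ≠ 0) (h5 : n % 8 ≠ 5) :
    ∃ v, ternaryForm v = n := by
  obtain ⟨p, hp, hp3, X, S, T, hT, h⟩ :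
      ∃ p : ℕ, p.Prime ∧ p % 3 = 1 ∧ IsRatSqAddMulSq (2 * p) n := by
    rcases n.even_or_odd' with ⟨m, rfl | rfl⟩
    · exact exists_prime_isRatSqAddMulSq_two_mul (Nat.odd_iff.2 (by omega))
    · exact exists_prime_isRatSqAddMulSq_of_odd (odd_two_mul_add_one m) h5
  have := Fact.mk hp
  obtain ⟨r, hr⟩ := exists_hexagonalForm_eq_prime hp3
  refine ternaryForm_isEuclidean.exists_eq_of_eq_mul_sq ternaryForm_posDef.anisotropic
    (v := (X, S • r)) hT ?_
  rw [ternaryForm_apply, QuadraticMap.map_smul, hr, smul_eq_mul, ← h]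
  ring

lemma exists_ternaryForm_eq_four_pow_mul (k : ℕ) (m : ℤ) :
    (∃ v, ternaryForm v = 4 ^ k * m) ↔ ∃ v, ternaryForm v = m := by
  have h4 : (4 : ℤ) ^ k = (2 ^ k) ^ 2 := by rw [pow_right_comm]; norm_num
  refine ⟨fun ⟨v, hv⟩ ↦ ?_, fun ⟨v, hv⟩ ↦ ⟨(2 ^ k : ℤ) • v, ?_⟩⟩
  · exact ternaryForm_isEuclidean.exists_eq_of_eq_mul_sq ternaryForm_posDef.anisotropic
      (T := 2 ^ k) (by positivity) (by rw [hv, h4, mul_comm])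
  · rw [QuadraticMap.map_smul, hv, h4, pow_two, smul_eq_mul]

theorem stmt_11 (n : ℕ) :
    (∃ x y z : ℤ, (n : ℤ) = x ^ 2 + 2 * (y ^ 2 + y * z + z ^ 2)) ↔
    ¬ ∃ k l : ℕ, n = 4 ^ k * (8 * l + 5) := by
  have hiff : (∃ x y z : ℤ, (n : ℤ) = x ^ 2 + 2 * (y ^ 2 + y * z + z ^ 2)) ↔
      ∃ v, ternaryForm v = n := by
    simp only [Prod.exists, ternaryForm_apply, hexagonalForm_apply, eq_comm]
  rw [hiff]
  refine ⟨?_, fun hn ↦ ?_⟩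
  · rintro hv ⟨k, l, rfl⟩
    obtain ⟨w, hw⟩ := (exists_ternaryForm_eq_four_pow_mul k (8 * l + 5)).1 (mod_cast hv)
    have := ternaryForm_emod_eight_ne_five w
    omega
  · rcases eq_or_ne n 0 with rfl | h0
    · exact ⟨0, by simp⟩
    obtain ⟨k, m, hm, rfl⟩ := Nat.exists_eq_pow_mul_and_not_dvd h0 4 (by norm_num)
    have hm5 : m % 8 ≠ 5 := fun h ↦ hn ⟨k, m / 8, by rw [← h, Nat.div_add_mod]⟩
    exact_mod_cast (exists_ternaryForm_eq_four_pow_mul k m).2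
      (exists_ternaryForm_eq (by omega) hm5)
end

section
/- A nonnegative integer n can be written as x² + 3·(y² + y·z + z²) with x, y, z ∈ ℤ if and only if n is not of the form 3·l + 2 for a nonnegative integer l and not of the form 9^k·(9·l + 6) for nonnegative integers k and l. -/
/-!
Write `N(y, z) = y² + yz + z²` for the norm form of the Eisenstein integers.

*Reduction.* Every positive definite integral ternary form is equivalent to a Minkowski reduced one,
and the diagonal coefficients of a reduced form satisfy `2abc ≤ D`, where `D` is the
half-discriminant. For `D = 3` this forces `a = b = c = 1`, and the only class is that of `x² + N`.

*Numbers of the form `x² + N`.* By the reduction, it suffices to find a positive definite form of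
half-discriminant `3` that has `n` as a coefficient. Write `n = dm` with `3 ∤ m` and `d ∈ {1, 3}`,
where `m ≡ 1 (mod 3)` if `d = 3`. Such a form exists as soon as there is a prime
`p ≡ -d (mod 4m)` modulo which `-(3/d)m` is a square; Dirichlet's theorem provides `p`, and
quadratic reciprocity the residue symbol. Since `9n` is of the form `x² + N` if and only if `n` is,
and `9l + 6` never is, exactly the numbers `9 ^ k * (9 * l + 6)` are excluded.

*From `x² + N` to `x² + 3N`.* The values of `3N` are the values of `N` divisible by `3`. If
`n = x² + N(y, z) ≢ 2 (mod 3)` but `3 ∤ N(y, z)`, then `3 ∣ x`, and a reflection of `x² + N` moves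
`(x, y, z)` to a vector whose first coordinate is prime to `3`.
-/

/-- The norm form `y² + yz + z²` of the Eisenstein integers. -/
def eisensteinNorm (y z : ℤ) : ℤ := y ^ 2 + y * z + z ^ 2

/-- `n` is a value of the ternary form `x² + (y² + yz + z²)`. -/
def IsSqAddNorm (n : ℤ) : Prop := ∃ x y z, n = x ^ 2 + eisensteinNorm y z

/-- The integral ternary quadratic form `ax² + by² + cz² + ryz + sxz + txy`. -/
structure TernaryForm where
  (a b c r s t : ℤ)

namespace TernaryForm

variable {f g : TernaryForm} {n : ℤ}

/-- The value of the form at `(x, y, z)`. -/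
def eval (f : TernaryForm) (x y z : ℤ) : ℤ :=
  f.a * x ^ 2 + f.b * y ^ 2 + f.c * z ^ 2 + f.r * y * z + f.s * x * z + f.t * x * y

/-- The half-discriminant: half the determinant of the matrix of second partial derivatives. -/
def halfDisc (f : TernaryForm) : ℤ :=
  4 * f.a * f.b * f.c + f.r * f.s * f.t - f.a * f.r ^ 2 - f.b * f.s ^ 2 - f.c * f.t ^ 2

/-- The form takes positive values away from the origin. -/
def PosDef (f : TernaryForm) : Prop :=
  ∀ x y z, ¬(x = 0 ∧ y = 0 ∧ z = 0) → 0 < f.eval x y z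

/-- The form represents `n`, possibly imprimitively. -/
def Represents (f : TernaryForm) (n : ℤ) : Prop :=
  ∃ x y z, f.eval x y z = n

lemma PosDef.a_pos (hf : f.PosDef) : 0 < f.a := by
  simpa [eval] using hf 1 0 0 (by simp)

lemma PosDef.b_pos (hf : f.PosDef) : 0 < f.b := by
  simpa [eval] using hf 0 1 0 (by simp)

lemma PosDef.c_pos (hf : f.PosDef) : 0 < f.c := by
  simpa [eval] using hf 0 0 1 (by simp)

theorem posDef_of_minors_pos (ha : 0 < f.a) (hab : 0 < 4 * f.a * f.b - f.t ^ 2)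
    (hD : 0 < f.halfDisc) : f.PosDef := by
  intro x y z hxyz
  set d := 4 * f.a * f.b - f.t ^ 2 with hd
  have hsq : 4 * f.a * d * f.eval x y z =
      d * (2 * f.a * x + f.t * y + f.s * z) ^ 2 +
        (d * y + (2 * f.a * f.r - f.s * f.t) * z) ^ 2 + 4 * f.a * f.halfDisc * z ^ 2 := by
    simp only [hd, eval, halfDisc]
    ring
  refine pos_of_mul_pos_right (a := 4 * f.a * d) ?_ (by positivity)
  rw [hsq]
  obtain hz | rfl := ne_or_eq z 0
  · positivity
  obtain hy | rfl := ne_or_eq y 0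
  · have : d * y + (2 * f.a * f.r - f.s * f.t) * 0 ≠ 0 := by simp [hab.ne', hy]
    positivity
  · have : 2 * f.a * x + f.t * 0 + f.s * 0 ≠ 0 := by simpa [ha.ne'] using hxyz
    positivity

/-! ### Equivalence of forms -/

/-- The form `f(y, x, z)`. -/
def swapXY (f : TernaryForm) : TernaryForm := ⟨f.b, f.a, f.c, f.s, f.r, f.t⟩

/-- The form `f(x, z, y)`. -/
def swapYZ (f : TernaryForm) : TernaryForm := ⟨f.a, f.c, f.b, f.r, f.t, f.s⟩

/-- The form `f(x, y + ux, z + vx)`, in which the first basis vector has been replaced by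
`(1, u, v)`. -/
def shear (f : TernaryForm) (u v : ℤ) : TernaryForm :=
  ⟨f.eval 1 u v, f.b, f.c, f.r, f.s + 2 * f.c * v + f.r * u, f.t + 2 * f.b * u + f.r * v⟩

lemma eval_swapXY (f : TernaryForm) (x y z : ℤ) : f.swapXY.eval x y z = f.eval y x z := by
  simp only [eval, swapXY]
  ring

lemma eval_swapYZ (f : TernaryForm) (x y z : ℤ) : f.swapYZ.eval x y z = f.eval x z y := by
  simp only [eval, swapYZ]
  ring

lemma eval_shear (f : TernaryForm) (u v x y z : ℤ) :
    (f.shear u v).eval x y z = f.eval x (y + u * x) (z + v * x) := by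
  simp only [eval, shear]
  ring

/-- An elementary unimodular substitution. -/
inductive Step : TernaryForm → TernaryForm → Prop
  | swapXY (f : TernaryForm) : Step f f.swapXY
  | swapYZ (f : TernaryForm) : Step f f.swapYZ
  | shear (f : TernaryForm) (u v : ℤ) : Step f (f.shear u v)

/-- Equivalence under unimodular substitutions. Together with `-1`, which fixes every form, the
elementary substitutions and their inverses, which are again elementary, generate `GL₃(ℤ)`. -/
def Equivalent : TernaryForm → TernaryForm → Prop := Relation.ReflTransGen Step

lemma Step.halfDisc_eq (h : Step f g) : g.halfDisc = f.halfDisc := by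
  cases h <;>
    simp only [halfDisc, TernaryForm.swapXY, TernaryForm.swapYZ, TernaryForm.shear, eval] <;>
    ring

lemma Step.posDef (h : Step f g) (hf : f.PosDef) : g.PosDef := by
  intro x y z hxyz
  cases h with
  | swapXY => exact eval_swapXY f x y z ▸ hf y x z (by tauto)
  | swapYZ => exact eval_swapYZ f x y z ▸ hf x z y (by tauto)
  | shear u v =>
    rw [eval_shear]
    refine hf _ _ _ fun ⟨hx, hy, hz⟩ ↦ hxyz ?_
    subst hx
    simpa using And.intro hy hz

lemma Step.represents (h : Step f g) : f.Represents n → g.Represents n := by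
  rintro ⟨x, y, z, rfl⟩
  cases h with
  | swapXY => exact ⟨y, x, z, eval_swapXY ..⟩
  | swapYZ => exact ⟨x, z, y, eval_swapYZ ..⟩
  | shear u v => exact ⟨x, y - u * x, z - v * x, by simp only [eval_shear, sub_add_cancel]⟩

lemma Equivalent.halfDisc_eq (h : Equivalent f g) : g.halfDisc = f.halfDisc := by
  induction h with
  | refl => rfl
  | tail _ hstep ih => exact hstep.halfDisc_eq.trans ih

lemma Equivalent.posDef (h : Equivalent f g) (hf : f.PosDef) : g.PosDef := by
  induction h with
  | refl => exact hf
  | tail _ hstep ih => exact hstep.posDef ih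

lemma Equivalent.represents (h : Equivalent f g) (hf : f.Represents n) : g.Represents n := by
  induction h with
  | refl => exact hf
  | tail _ hstep ih => exact hstep.represents ih

lemma equivalent_shear_swapXY (f : TernaryForm) (u v : ℤ) :
    Equivalent f (f.swapXY.shear u v).swapXY :=
  ((Relation.ReflTransGen.single (.swapXY f)).tail (.shear _ u v)).tail (.swapXY _)

lemma equivalent_shear_swapYZ_swapXY (f : TernaryForm) (u v : ℤ) :
    Equivalent f (f.swapYZ.swapXY.shear u v).swapXY.swapYZ :=
  ((((Relation.ReflTransGen.single (.swapYZ f)).tail (.swapXY _)).tail (.shear _ u v)).tail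
    (.swapXY _)).tail (.swapYZ _)

/-! ### Reduced forms -/

/-- Minkowski reduced forms: the basis vectors are ordered by their values, and the second and third
cannot be shortened by adding integral multiples of the other two. -/
structure IsReduced (f : TernaryForm) : Prop where
  a_pos : 0 < f.a
  a_le_b : f.a ≤ f.b
  b_le_c : f.b ≤ f.c
  b_le_eval : ∀ x z, f.b ≤ f.eval x 1 z
  c_le_eval : ∀ x y, f.c ≤ f.eval x y 1

theorem PosDef.exists_equivalent_isReduced (hf : f.PosDef) :
    ∃ g, Equivalent f g ∧ g.IsReduced := by
  -- The decreasing weights make a minimal form ordered as well as unshortenable.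
  let weight (g : TernaryForm) : ℕ := (3 * g.a + 2 * g.b + g.c).toNat
  obtain ⟨g, hfg, hmin⟩ :=
    (measure weight).wf.has_min {g | Equivalent f g} ⟨f, Relation.ReflTransGen.refl⟩
  have hg := hfg.posDef hf
  have weight_le {h : TernaryForm} (hgh : Equivalent g h) :
      3 * g.a + 2 * g.b + g.c ≤ 3 * h.a + 2 * h.b + h.c := by
    have hlt : ¬ weight h < weight g := hmin h (hfg.trans hgh)
    have hpos := hgh.posDef hg
    have := hpos.a_pos
    have := hpos.b_pos
    have := hpos.c_pos
    simp only [weight] at hlt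
    omega
  refine ⟨g, hfg, hg.a_pos, ?_, ?_, fun x z ↦ ?_, fun x y ↦ ?_⟩
  · have := weight_le (.single (.swapXY g))
    simp only [swapXY] at this
    linarith
  · have := weight_le (.single (.swapYZ g))
    simp only [swapYZ] at this
    linarith
  · have := weight_le (equivalent_shear_swapXY g x z)
    simp only [swapXY, shear, eval] at this ⊢
    linarith
  · have := weight_le (equivalent_shear_swapYZ_swapXY g x y)
    simp only [swapXY, swapYZ, shear, eval] at this ⊢
    linarith

lemma IsReduced.abs_r_le (hf : f.IsReduced) : |f.r| ≤ f.b := by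
  have h₁ := hf.c_le_eval 0 1
  have h₂ := hf.c_le_eval 0 (-1)
  simp only [eval] at h₁ h₂
  exact abs_le.2 ⟨by linarith, by linarith⟩

lemma IsReduced.abs_s_le (hf : f.IsReduced) : |f.s| ≤ f.a := by
  have h₁ := hf.c_le_eval 1 0
  have h₂ := hf.c_le_eval (-1) 0
  simp only [eval] at h₁ h₂
  exact abs_le.2 ⟨by linarith, by linarith⟩

lemma IsReduced.abs_t_le (hf : f.IsReduced) : |f.t| ≤ f.a := by
  have h₁ := hf.b_le_eval 1 0
  have h₂ := hf.b_le_eval (-1) 0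
  simp only [eval] at h₁ h₂
  exact abs_le.2 ⟨by linarith, by linarith⟩

lemma IsReduced.abs_add_abs_add_abs_le (hf : f.IsReduced) (hneg : f.r * f.s * f.t < 0) :
    |f.r| + |f.s| + |f.t| ≤ f.a + f.b := by
  have hsign : f.r.sign * f.s.sign * f.t.sign = -1 := by
    rw [← Int.sign_mul, ← Int.sign_mul, Int.sign_eq_neg_one_of_neg hneg]
  have hr : f.r ≠ 0 := by rintro h; simp [h] at hneg
  have hs : f.s ≠ 0 := by rintro h; simp [h] at hneg
  have ht : f.t ≠ 0 := by rintro h; simp [h] at hneg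
  have hr2 : f.r.sign ^ 2 = 1 := by rw [← sq_abs, Int.abs_sign_of_ne_zero hr, one_pow]
  have hs2 : f.s.sign ^ 2 = 1 := by rw [← sq_abs, Int.abs_sign_of_ne_zero hs, one_pow]
  have ht2 : f.t.sign ^ 2 = 1 := by rw [← sq_abs, Int.abs_sign_of_ne_zero ht, one_pow]
  have hrs : f.r.sign * f.s.sign = -f.t.sign := by
    linear_combination f.t.sign * hsign - f.r.sign * f.s.sign * ht2
  have h := hf.c_le_eval (-f.s.sign) (-f.r.sign)
  have heval : f.eval (-f.s.sign) (-f.r.sign) 1 =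
      f.a + f.b + f.c - |f.r| - |f.s| - |f.t| := by
    simp only [eval, ← Int.sign_mul_self_eq_abs]
    linear_combination f.a * hs2 + f.b * hr2 + f.t * hrs
  linarith

section GaussBound

variable {R : Type*} [CommRing R] [LinearOrder R] [IsStrictOrderedRing R] {a b c r s t : R}

lemma sq_add_sq_add_sq_le_of_nonneg (hab : a ≤ b) (hbc : b ≤ c) (hr : 0 ≤ r) (hs : 0 ≤ s)
    (ht : 0 ≤ t) (hrb : r ≤ b) (hsa : s ≤ a) (hta : t ≤ a) :
    a * r ^ 2 + b * s ^ 2 + c * t ^ 2 ≤ 2 * (a * b * c) + r * s * t := by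
  have ha : 0 ≤ a := hs.trans hsa
  have hb : 0 ≤ b := ha.trans hab
  have hc : 0 ≤ c := hb.trans hbc
  have hr2 : 0 ≤ a * (r * (b - r)) := mul_nonneg ha (mul_nonneg hr (sub_nonneg.2 hrb))
  have hs2 : 0 ≤ b * (s * (a - s)) := mul_nonneg hb (mul_nonneg hs (sub_nonneg.2 hsa))
  have ht2 : 0 ≤ c * (t * (a - t)) := mul_nonneg hc (mul_nonneg ht (sub_nonneg.2 hta))
  -- What remains is affine in `t`, so it is enough to treat `t = 0` and `t = a`.
  have h0 : 0 ≤ (a - t) * (b * (2 * c - r - s)) :=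
    mul_nonneg (sub_nonneg.2 hta) (mul_nonneg hb (by linarith))
  have h1 : 0 ≤ t * ((b - r) * (b - s) + b * (c - b) + c * (b - a)) :=
    mul_nonneg ht <| add_nonneg (add_nonneg
      (mul_nonneg (sub_nonneg.2 hrb) (sub_nonneg.2 (hsa.trans hab)))
      (mul_nonneg hb (sub_nonneg.2 hbc))) (mul_nonneg hc (sub_nonneg.2 hab))
  linear_combination hr2 + hs2 + ht2 + h0 + h1

lemma sq_add_sq_add_sq_le_of_add_le (hab : a ≤ b) (hbc : b ≤ c) (hr : 0 ≤ r) (hs : 0 ≤ s)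
    (ht : 0 ≤ t) (hrb : r ≤ b) (hsa : s ≤ a) (hta : t ≤ a) (hsum : r + s + t ≤ a + b) :
    a * r ^ 2 + b * s ^ 2 + c * t ^ 2 ≤ 2 * (a * b * c) - r * s * t := by
  have ha : 0 ≤ a := hs.trans hsa
  have hb : 0 ≤ b := ha.trans hab
  have hslope : 0 ≤ (c - b) * (2 * (a * b) - t ^ 2) := by
    have : t ^ 2 ≤ a * b := by nlinarith
    exact mul_nonneg (sub_nonneg.2 hbc) (by nlinarith [mul_nonneg ha hb])
  suffices a * r ^ 2 + b * (s + t) ^ 2 ≤ 2 * (a * b * b) + (2 * b - r) * (s * t) by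
    linear_combination this + hslope
  obtain hst | hst := le_total (s + t) a
  · calc a * r ^ 2 + b * (s + t) ^ 2 ≤ a * b ^ 2 + b * a ^ 2 := by gcongr
      _ ≤ 2 * (a * b * b) := by nlinarith [mul_nonneg ha hb]
      _ ≤ 2 * (a * b * b) + (2 * b - r) * (s * t) :=
        le_add_of_nonneg_right (mul_nonneg (by linarith) (mul_nonneg hs ht))
  · have hst' : a * (s + t - a) ≤ s * t := by
      linear_combination mul_nonneg (sub_nonneg.2 hsa) (sub_nonneg.2 hta)
    have h1 : (2 * b - r) * (a * (s + t - a)) ≤ (2 * b - r) * (s * t) :=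
      mul_le_mul_of_nonneg_left hst' (by linarith)
    have h2 : 0 ≤ b * ((s + t - a) * (2 * a - (s + t))) :=
      mul_nonneg hb (mul_nonneg (sub_nonneg.2 hst) (by linarith))
    have h3 : 0 ≤ a * (b + r) * (a + b - (r + s + t)) :=
      mul_nonneg (mul_nonneg ha (add_nonneg hb hr)) (sub_nonneg.2 hsum)
    have h4 : 0 ≤ a * b * (b - a) := mul_nonneg (mul_nonneg ha hb) (sub_nonneg.2 hab)
    linear_combination h1 + h2 + h3 + h4

end GaussBound

/-- Gauss's bound for reduced ternary forms, with the optimal constant. -/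
theorem IsReduced.two_mul_le_halfDisc (hf : f.IsReduced) :
    2 * (f.a * f.b * f.c) ≤ f.halfDisc := by
  have habs : |f.r| * |f.s| * |f.t| = |f.r * f.s * f.t| := by rw [abs_mul, abs_mul]
  unfold halfDisc
  obtain hneg | hnonneg := lt_or_ge (f.r * f.s * f.t) 0
  · have := sq_add_sq_add_sq_le_of_add_le hf.a_le_b hf.b_le_c (abs_nonneg _) (abs_nonneg _)
      (abs_nonneg _) hf.abs_r_le hf.abs_s_le hf.abs_t_le (hf.abs_add_abs_add_abs_le hneg)
    rw [habs, abs_of_neg hneg, sq_abs, sq_abs, sq_abs] at this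
    linarith
  · have := sq_add_sq_add_sq_le_of_nonneg hf.a_le_b hf.b_le_c (abs_nonneg _) (abs_nonneg _)
      (abs_nonneg _) hf.abs_r_le hf.abs_s_le hf.abs_t_le
    rw [habs, abs_of_nonneg hnonneg, sq_abs, sq_abs, sq_abs] at this
    linarith

lemma IsReduced.diag_eq_one (hf : f.IsReduced) (hD : f.halfDisc = 3) :
    f.a = 1 ∧ f.b = 1 ∧ f.c = 1 := by
  have ha := hf.a_pos
  have hab := hf.a_le_b
  have hbc := hf.b_le_c
  have hprod : f.a * f.b * f.c ≤ 1 := by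
    have := hf.two_mul_le_halfDisc
    omega
  have hc : f.c ≤ 1 := by nlinarith [mul_pos ha (ha.trans_le hab)]
  omega

lemma IsReduced.off_diag_eq (hf : f.IsReduced) (hD : f.halfDisc = 3) :
    (|f.r| = 1 ∧ f.s = 0 ∧ f.t = 0) ∨ (f.r = 0 ∧ |f.s| = 1 ∧ f.t = 0) ∨
      (f.r = 0 ∧ f.s = 0 ∧ |f.t| = 1) := by
  obtain ⟨ha, hb, hc⟩ := hf.diag_eq_one hD
  obtain ⟨hr₁, hr₂⟩ := abs_le.1 (hb ▸ hf.abs_r_le)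
  obtain ⟨hs₁, hs₂⟩ := abs_le.1 (ha ▸ hf.abs_s_le)
  obtain ⟨ht₁, ht₂⟩ := abs_le.1 (ha ▸ hf.abs_t_le)
  simp only [halfDisc, ha, hb, hc] at hD
  generalize f.r = r, f.s = s, f.t = t at *
  interval_cases r <;> interval_cases s <;> interval_cases t <;> revert hD <;> decide

lemma IsReduced.isSqAddNorm (hf : f.IsReduced) (hD : f.halfDisc = 3) (hn : f.Represents n) :
    IsSqAddNorm n := by
  obtain ⟨x, y, z, rfl⟩ := hn
  obtain ⟨ha, hb, hc⟩ := hf.diag_eq_one hD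
  simp only [IsSqAddNorm, eisensteinNorm, eval, ha, hb, hc]
  obtain ⟨hr, hs, ht⟩ | ⟨hr, hs, ht⟩ | ⟨hr, hs, ht⟩ := hf.off_diag_eq hD
  · obtain hr | hr := eq_or_eq_neg_of_abs_eq hr
    · exact ⟨x, y, z, by rw [hr, hs, ht]; ring⟩
    · exact ⟨x, y, -z, by rw [hr, hs, ht]; ring⟩
  · obtain hs | hs := eq_or_eq_neg_of_abs_eq hs
    · exact ⟨y, x, z, by rw [hr, hs, ht]; ring⟩
    · exact ⟨y, x, -z, by rw [hr, hs, ht]; ring⟩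
  · obtain ht | ht := eq_or_eq_neg_of_abs_eq ht
    · exact ⟨z, x, y, by rw [hr, hs, ht]; ring⟩
    · exact ⟨z, x, -y, by rw [hr, hs, ht]; ring⟩

theorem PosDef.isSqAddNorm (hf : f.PosDef) (hD : f.halfDisc = 3) (hn : f.Represents n) :
    IsSqAddNorm n := by
  obtain ⟨g, hfg, hg⟩ := hf.exists_equivalent_isReduced
  exact hg.isSqAddNorm (hfg.halfDisc_eq.trans hD) (hfg.represents hn)

end TernaryForm

/-! ### Forms with a prescribed coefficient -/

lemma exists_dvd_mul_sq_add {p : ℕ} [Fact p.Prime] {k m : ℤ} (h : jacobiSym (-k * m) p = 1) :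
    ∃ t : ℤ, (p : ℤ) ∣ m * t ^ 2 + k := by
  obtain ⟨w, hw⟩ := ZMod.isSquare_of_jacobiSym_eq_one h
  have hm : (m : ZMod p) ≠ 0 := by
    intro hm
    rw [jacobiSym.mul_left, ← jacobiSym.legendreSym.to_jacobiSym p m,
      (legendreSym.eq_zero_iff p m).2 hm, mul_zero] at h
    exact zero_ne_one h
  obtain ⟨t, ht⟩ := ZMod.intCast_surjective (w / (m : ZMod p))
  refine ⟨t, (ZMod.intCast_zmod_eq_zero_iff_dvd _ p).1 ?_⟩
  push_cast at hw ⊢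
  rw [ht]
  field_simp
  linear_combination -hw

lemma jacobiSym_eq_of_dvd_add {m d p : ℕ} (hd : Odd d) (hdm : d < 4 * m) (hp : 4 * m ∣ p + d) :
    jacobiSym m p = jacobiSym d (4 * m - d) := by
  obtain ⟨j, hj⟩ := hd
  have hp_odd : Odd p := by
    have : 2 ∣ p + d := (Dvd.intro (2 * m) (by ring)).trans hp
    rw [Nat.odd_iff]
    omega
  have hres_odd : Odd (4 * m - d) := by
    rw [Nat.odd_iff]
    omega
  have hmod : p ≡ 4 * m - d [MOD 4 * m] := by
    refine Nat.ModEq.add_right_cancel' d ?_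
    rw [Nat.sub_add_cancel hdm.le]
    exact ((Nat.modEq_zero_iff_dvd).2 hp).trans ((Nat.modEq_zero_iff_dvd).2 dvd_rfl).symm
  calc jacobiSym m p = jacobiSym m (4 * m - d) := by
        rw [jacobiSym.mod_right' m hp_odd, hmod, ← jacobiSym.mod_right' m hres_odd]
    _ = jacobiSym (4 * m) (4 * m - d) := by
        rw [jacobiSym.mul_left, jacobiSym.at_four hres_odd, one_mul]
    _ = jacobiSym d (4 * m - d) := by
        refine jacobiSym.mod_left' (Int.ModEq.symm (Int.modEq_iff_dvd.2 ⟨1, ?_⟩))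
        push_cast [hdm.le]
        ring

lemma isSqAddNorm_mul_of_prime {m d k : ℤ} {p : ℕ} [Fact p.Prime] (hm : 0 < m) (hd : 0 < d)
    (hdk : d * k = 3) (hp : 4 * m ∣ p + d) (hJ : jacobiSym (-k * m) p = 1) :
    IsSqAddNorm (d * m) := by
  obtain ⟨b, hb⟩ := hp
  obtain ⟨t, a, ha⟩ := exists_dvd_mul_sq_add hJ
  have hk : 0 < k := pos_of_mul_pos_right (hdk ▸ three_pos) hd.le
  have hp_pos : (0 : ℤ) < p := mod_cast (Fact.out : p.Prime).pos
  have ha_pos : 0 < a := pos_of_mul_pos_right (a := (p : ℤ)) (ha ▸ by positivity) hp_pos.le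
  let f : TernaryForm := ⟨a, b, d * m, d, 0, t⟩
  have hD : f.halfDisc = 3 := by
    simp only [f, TernaryForm.halfDisc]
    linear_combination hdk - d * ha - d * a * hb
  have hminor : d * m * (4 * a * b - t ^ 2) = 3 + a * d ^ 2 := by
    rw [← hD]
    simp only [f, TernaryForm.halfDisc]
    ring
  refine TernaryForm.PosDef.isSqAddNorm (f := f) ?_ hD ⟨0, 0, 1, by simp [f, TernaryForm.eval]⟩
  refine TernaryForm.posDef_of_minors_pos ha_pos ?_ (hD ▸ three_pos)
  exact pos_of_mul_pos_right (hminor ▸ by positivity) (mul_pos hd hm).le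

lemma jacobiSym_neg_three_of_mod_twelve {p : ℕ} (hp : p % 12 = 7) : jacobiSym (-3) p = 1 := by
  have hodd : Odd p := Nat.odd_iff.2 (by omega)
  rw [jacobiSym.mod_right _ hodd, show 4 * (-3 : ℤ).natAbs = 12 from rfl, hp]
  norm_num

lemma sq_emod_three (x : ℤ) : 3 ∣ x ∧ x ^ 2 % 3 = 0 ∨ ¬3 ∣ x ∧ x ^ 2 % 3 = 1 := by
  obtain h | h | h : x % 3 = 0 ∨ x % 3 = 1 ∨ x % 3 = 2 := by omega
  all_goals simp [Int.dvd_iff_emod_eq_zero, pow_two, Int.mul_emod, h]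

lemma isSqAddNorm_of_not_three_dvd {m : ℕ} (hm : ¬3 ∣ m) : IsSqAddNorm m := by
  have hm_pos : 0 < m := Nat.pos_of_ne_zero (by rintro rfl; exact hm (dvd_zero 3))
  obtain ⟨j, hj⟩ : (3 : ℤ) ∣ m ^ 2 - 1 := by
    have := sq_emod_three m
    omega
  -- `8m² - 1` is `-1` modulo `4m` and `1` modulo `3`, and its square is `1` modulo `12m`.
  have hcop : IsCoprime (8 * m ^ 2 - 1 : ℤ) (12 * m : ℕ) := by
    refine ⟨8 * m ^ 2 - 1, -(4 * m * (4 * j + 1)), ?_⟩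
    push_cast
    linear_combination 16 * (m : ℤ) ^ 2 * 4 * hj
  obtain ⟨p, -, hp, hpm⟩ := Nat.forall_exists_prime_gt_and_zmodEq 0 (by positivity) hcop
  have : Fact p.Prime := ⟨hp⟩
  obtain ⟨i, hi⟩ := hpm.symm.dvd
  push_cast at hi
  have h4m : 4 * m ∣ p + 1 := by
    zify
    exact ⟨3 * i + 2 * m, by linear_combination hi⟩
  have h12 : p % 12 = 7 := by
    have h4 : 4 ∣ p + 1 := (Dvd.intro m rfl).trans h4m
    have h3 : (3 : ℤ) ∣ p - 1 := ⟨4 * m * i + 8 * j + 2, by linear_combination hi + 8 * hj⟩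
    omega
  have hJ : jacobiSym m p = 1 := by
    rw [jacobiSym_eq_of_dvd_add odd_one (by omega) h4m, Nat.cast_one, jacobiSym.one_left]
  rw [← one_mul (m : ℤ)]
  refine isSqAddNorm_mul_of_prime (k := 3) (p := p) (mod_cast hm_pos) one_pos (by norm_num)
    (mod_cast h4m) ?_
  rw [jacobiSym.mul_left, jacobiSym_neg_three_of_mod_twelve h12, hJ, one_mul]

lemma isSqAddNorm_three_mul {m : ℕ} (hm : m % 3 = 1) : IsSqAddNorm (3 * m) := by
  have hcop : IsCoprime (-3 : ℤ) (4 * m : ℕ) := by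
    rw [IsCoprime.neg_left_iff]
    exact Nat.isCoprime_iff_coprime.2 ((Nat.prime_three.coprime_iff_not_dvd).2 (by omega))
  obtain ⟨p, -, hp, hpm⟩ := Nat.forall_exists_prime_gt_and_zmodEq 0 (by omega) hcop
  have : Fact p.Prime := ⟨hp⟩
  have h4m : 4 * m ∣ p + 3 := by
    zify
    simpa using hpm.symm.dvd
  have h4 : p % 4 = 1 := by
    have : 4 ∣ p + 3 := (Dvd.intro m rfl).trans h4m
    omega
  have hJ : jacobiSym m p = 1 :=
    calc jacobiSym m p = jacobiSym (3 : ℕ) (4 * m - 3) :=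
          jacobiSym_eq_of_dvd_add (by decide) (by omega) h4m
      _ = jacobiSym (4 * m - 3 : ℕ) 3 :=
          jacobiSym.quadratic_reciprocity_one_mod_four' (by decide) (by omega)
      _ = jacobiSym 1 3 := jacobiSym.mod_left' (by omega)
      _ = 1 := jacobiSym.one_left 3
  refine isSqAddNorm_mul_of_prime (k := 1) (p := p) (by omega) three_pos (by norm_num)
    (mod_cast h4m) ?_
  rw [jacobiSym.mul_left, jacobiSym.at_neg_one (Nat.odd_iff.2 (by omega)),
    ZMod.χ₄_nat_one_mod_four h4, hJ, one_mul]

/-! ### The numbers of the form x² + N -/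

lemma eisensteinNorm_emod_three (y z : ℤ) :
    3 ∣ y - z ∧ eisensteinNorm y z % 3 = 0 ∨ ¬3 ∣ y - z ∧ eisensteinNorm y z % 3 = 1 := by
  have hsq : eisensteinNorm y z = (y - z) ^ 2 + 3 * (y * z) := by
    unfold eisensteinNorm
    ring
  have := sq_emod_three (y - z)
  omega

lemma three_mul_eisensteinNorm (y z : ℤ) :
    3 * eisensteinNorm y z = eisensteinNorm (y - z) (y + 2 * z) := by
  unfold eisensteinNorm
  ring

-- Since `3` ramifies in the Eisenstein integers, `√-3` divides `y - zω`.
lemma exists_eisensteinNorm_eq_three_mul {y z : ℤ} (h : 3 ∣ eisensteinNorm y z) :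
    ∃ u v, eisensteinNorm y z = 3 * eisensteinNorm u v := by
  obtain ⟨w, hw⟩ : 3 ∣ y - z := by
    have := eisensteinNorm_emod_three y z
    omega
  obtain rfl : y = z + 3 * w := by linarith
  refine ⟨z + w, w, ?_⟩
  unfold eisensteinNorm
  ring

lemma isSqAddNorm_three_mul_iff {n : ℤ} :
    IsSqAddNorm (3 * n) ↔ ∃ w u v, n = 3 * w ^ 2 + eisensteinNorm u v := by
  constructor
  · rintro ⟨x, y, z, h⟩
    have hx := sq_emod_three x
    have hN := eisensteinNorm_emod_three y z
    obtain ⟨w, rfl⟩ : 3 ∣ x := by omega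
    obtain ⟨u, v, huv⟩ := exists_eisensteinNorm_eq_three_mul (y := y) (z := z) (by omega)
    exact ⟨w, u, v, by linarith⟩
  · rintro ⟨w, u, v, rfl⟩
    exact ⟨3 * w, u - v, u + 2 * v, by rw [← three_mul_eisensteinNorm]; ring⟩

lemma isSqAddNorm_nine_mul_iff {n : ℤ} : IsSqAddNorm (9 * n) ↔ IsSqAddNorm n := by
  rw [show 9 * n = 3 * (3 * n) by ring, isSqAddNorm_three_mul_iff]
  constructor
  · rintro ⟨w, u, v, h⟩
    obtain ⟨y, z, hyz⟩ := exists_eisensteinNorm_eq_three_mul (y := u) (z := v) (by omega)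
    exact ⟨w, y, z, by linarith⟩
  · rintro ⟨x, y, z, rfl⟩
    exact ⟨x, y - z, y + 2 * z, by rw [← three_mul_eisensteinNorm]; ring⟩

lemma isSqAddNorm_nine_pow_mul_iff (k : ℕ) {n : ℤ} :
    IsSqAddNorm (9 ^ k * n) ↔ IsSqAddNorm n := by
  induction k with
  | zero => rw [pow_zero, one_mul]
  | succ k ih => rw [pow_succ', mul_assoc, isSqAddNorm_nine_mul_iff, ih]

lemma not_isSqAddNorm_nine_mul_add_six (l : ℤ) : ¬IsSqAddNorm (9 * l + 6) := by
  rw [show 9 * l + 6 = 3 * (3 * l + 2) by ring, isSqAddNorm_three_mul_iff]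
  rintro ⟨w, u, v, h⟩
  have := eisensteinNorm_emod_three u v
  omega

lemma isSqAddNorm_of_not_nine_dvd {n : ℕ} (h9 : ¬9 ∣ n) (h6 : n % 9 ≠ 6) : IsSqAddNorm n := by
  by_cases h3 : 3 ∣ n
  · obtain ⟨m, rfl⟩ := h3
    exact mod_cast isSqAddNorm_three_mul (m := m) (by omega)
  · exact isSqAddNorm_of_not_three_dvd h3

theorem isSqAddNorm_iff (n : ℕ) : IsSqAddNorm n ↔ ¬∃ k l : ℕ, n = 9 ^ k * (9 * l + 6) := by
  constructor
  · rintro hn ⟨k, l, rfl⟩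
    push_cast at hn
    exact not_isSqAddNorm_nine_mul_add_six l ((isSqAddNorm_nine_pow_mul_iff k).1 hn)
  · intro hn
    obtain rfl | hn0 := eq_or_ne n 0
    · exact ⟨0, 0, 0, rfl⟩
    obtain ⟨k, m, h9, rfl⟩ := Nat.exists_eq_pow_mul_and_not_dvd hn0 9 (by norm_num)
    push_cast
    rw [isSqAddNorm_nine_pow_mul_iff]
    exact isSqAddNorm_of_not_nine_dvd h9 fun h6 ↦ hn ⟨k, m / 9, by congr 1; omega⟩

/-! ### From x² + N to x² + 3N -/

-- For even `z`, the reflection in `(1, 1, 0)` maps `(x, y, z)` to an integral vector whose first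
-- coordinate `-(y + z / 2)` is `z - y` modulo `3`.
lemma exists_not_three_dvd_fst_of_even {y z : ℤ} (x : ℤ) (hz : Even z) (hyz : ¬3 ∣ y - z) :
    ∃ x' y' z', ¬3 ∣ x' ∧ x' ^ 2 + eisensteinNorm y' z' = x ^ 2 + eisensteinNorm y z := by
  obtain ⟨w, rfl⟩ := hz
  refine ⟨-(y + w), -x - w, 2 * w, by omega, ?_⟩
  unfold eisensteinNorm
  ring

-- One of `y`, `z`, `y + z` is even, and the automorphisms of `N` permute them up to sign.
lemma exists_not_three_dvd_fst {y z : ℤ} (x : ℤ) (hyz : ¬3 ∣ y - z) :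
    ∃ x' y' z', ¬3 ∣ x' ∧ x' ^ 2 + eisensteinNorm y' z' = x ^ 2 + eisensteinNorm y z := by
  have hswap : eisensteinNorm z y = eisensteinNorm y z := by unfold eisensteinNorm; ring
  have hadd : eisensteinNorm (-z) (y + z) = eisensteinNorm y z := by unfold eisensteinNorm; ring
  obtain hz | hy | hyz' : Even z ∨ Even y ∨ Even (y + z) := by
    simp only [Int.even_iff]
    omega
  · exact exists_not_three_dvd_fst_of_even x hz hyz
  · exact hswap ▸ exists_not_three_dvd_fst_of_even x hy (by omega)
  · exact hadd ▸ exists_not_three_dvd_fst_of_even x hyz' (by omega)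

theorem exists_eq_sq_add_three_mul_eisensteinNorm_iff (n : ℤ) :
    (∃ x y z, n = x ^ 2 + 3 * eisensteinNorm y z) ↔ n % 3 ≠ 2 ∧ IsSqAddNorm n := by
  constructor
  · rintro ⟨x, y, z, rfl⟩
    have := sq_emod_three x
    exact ⟨by omega, x, y - z, y + 2 * z, by rw [three_mul_eisensteinNorm]⟩
  · rintro ⟨hn, x, y, z, rfl⟩
    suffices ∃ x' y' z', 3 ∣ eisensteinNorm y' z' ∧
        x' ^ 2 + eisensteinNorm y' z' = x ^ 2 + eisensteinNorm y z by
      obtain ⟨x', y', z', hdvd, h⟩ := this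
      obtain ⟨u, v, huv⟩ := exists_eisensteinNorm_eq_three_mul hdvd
      exact ⟨x', u, v, by rw [← h, huv]⟩
    by_cases hdvd : 3 ∣ eisensteinNorm y z
    · exact ⟨x, y, z, hdvd, rfl⟩
    have hyz := eisensteinNorm_emod_three y z
    obtain ⟨x', y', z', hx', h⟩ := exists_not_three_dvd_fst (y := y) (z := z) x (by omega)
    have := sq_emod_three x'
    have := eisensteinNorm_emod_three y' z'
    exact ⟨x', y', z', by omega, h⟩

theorem stmt_12 (n : ℕ) :
    (∃ x y z : ℤ, (n : ℤ) = x ^ 2 + 3 * (y ^ 2 + y * z + z ^ 2)) ↔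
    ((¬ ∃ l : ℕ, n = 3 * l + 2) ∧ ¬ ∃ k l : ℕ, n = 9 ^ k * (9 * l + 6)) := by
  have hmod : (n : ℤ) % 3 ≠ 2 ↔ ¬∃ l : ℕ, n = 3 * l + 2 :=
    not_congr ⟨fun h ↦ ⟨n / 3, by omega⟩, by rintro ⟨l, rfl⟩; omega⟩
  rw [← hmod, ← isSqAddNorm_iff]
  exact exists_eq_sq_add_three_mul_eisensteinNorm_iff n
end
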